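/- arXiv:2106.03726 — 3 statements merged into one kernel-verified Lean document; each statement's English description precedes it below -/
import Mathlib

section
/- Let d = d_1 + d_2 with d_1 ≥ 2 and d_2 ≥ 1, and let q_1, …, q_d be pairwise coprime positive integers. Assume V, Y : ℤ^d → ℝ are Γ-periodic, both are (d_1,d_2) separable with V = V_1 ⊕ V_2 and Y = Y_1 ⊕ Y_2 (where V_1, Y_1 are functions on ℤ^{d_1} and V_2, Y_2 on ℤ^{d_2}), and V and Y are Fermi isospectral. Then for j = 1, 2 there exists a constant C_j ∈ ℝ such that V_j + C_j and Y_j are Floquet isospectral as Γ_j-periodic potentials on ℤ^{d_j}. -/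
open scoped BigOperators
open Complex

noncomputable section

/-- The fundamental domain `W` for `Γ = q₁ℤ ⊕ ⋯ ⊕ q_dℤ`, as a type. -/
abbrev Cell (d : ℕ) (q : Fin d → ℕ) := (j : Fin d) → Fin (q j)

/-- `V : ℤ^d → ℝ` is `Γ`-periodic for `Γ = q₁ℤ ⊕ ⋯ ⊕ q_dℤ`. -/
def IsPeriodicPotential (d : ℕ) (q : Fin d → ℕ) (V : (Fin d → ℤ) → ℝ) : Prop :=
  ∀ n γ : Fin d → ℤ, (∀ j, (q j : ℤ) ∣ γ j) → V (n + γ) = V n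

/-- The discrete Fourier transform `V̂(l)`, defined for all `l ∈ ℤ^d`
(it is automatically `Γ`-periodic in `l`). -/
def dft (d : ℕ) (q : Fin d → ℕ) (V : (Fin d → ℤ) → ℝ) (l : Fin d → ℤ) : ℂ :=
  (1 / ∏ j, (q j : ℂ)) *
    ∑ n : Cell d q, (V (fun j => ((n j : ℕ) : ℤ)) : ℂ) *
      Complex.exp (-(2 * Real.pi * Complex.I) * ∑ j, (l j : ℂ) * ((n j : ℕ) : ℂ) / (q j : ℂ))

/-- `ρ^j_m = e^{2πi m/q_j}`. -/
def rho (d : ℕ) (q : Fin d → ℕ) (j : Fin d) (m : ℤ) : ℂ :=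
  Complex.exp (2 * Real.pi * Complex.I * (m : ℂ) / (q j : ℂ))

/-- The Floquet matrix `M_V(z)` (the matrix `A + B_V` of Lemma 2.7). -/
def floquetMatrix (d : ℕ) (q : Fin d → ℕ) (V : (Fin d → ℤ) → ℝ) (z : Fin d → ℂ) :
    Matrix (Cell d q) (Cell d q) ℂ := fun n n' =>
  (if n = n' then ∑ j, (rho d q j (n j : ℕ) * z j + (rho d q j (n j : ℕ) * z j)⁻¹) else 0)
    + dft d q V (fun j => ((n j : ℕ) : ℤ) - ((n' j : ℕ) : ℤ))

/-- `P̃_V(z, λ) = det (M_V(z) − λ I)`. -/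
def floquetDet (d : ℕ) (q : Fin d → ℕ) (V : (Fin d → ℤ) → ℝ) (z : Fin d → ℂ) (lam : ℂ) : ℂ :=
  Matrix.det (floquetMatrix d q V z - lam • (1 : Matrix (Cell d q) (Cell d q) ℂ))

/-- `V` and `Y` are Fermi isospectral. -/
def FermiIsospectral (d : ℕ) (q : Fin d → ℕ) (V Y : (Fin d → ℤ) → ℝ) : Prop :=
  ∃ lam0 : ℂ,
    {z : Fin d → ℂ | (∀ j, z j ≠ 0) ∧ floquetDet d q V z lam0 = 0}
      = {z : Fin d → ℂ | (∀ j, z j ≠ 0) ∧ floquetDet d q Y z lam0 = 0}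

/-- `V` and `Y` are Floquet isospectral. -/
def FloquetIsospectral (d : ℕ) (q : Fin d → ℕ) (V Y : (Fin d → ℤ) → ℝ) : Prop :=
  ∀ z : Fin d → ℂ, (∀ j, z j ≠ 0) → ∀ lam : ℂ,
    floquetDet d q V z lam = floquetDet d q Y z lam

/-- The average `[V]` of `V` over one periodicity cell. -/
def potentialAvg (d : ℕ) (q : Fin d → ℕ) (V : (Fin d → ℤ) → ℝ) : ℝ :=
  (1 / ∏ j, (q j : ℝ)) * ∑ n : Cell d q, V (fun j => ((n j : ℕ) : ℤ))

/-- The embedding of the `j`-th block of coordinates into `Fin d`,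
given block sizes `D : Fin r → ℕ` with `∑ j, D j = d`. -/
def blockEmbed {r d : ℕ} (D : Fin r → ℕ) (hsum : ∑ j, D j = d) (j : Fin r) (i : Fin (D j)) :
    Fin d :=
  ⟨(∑ k ∈ Finset.univ.filter (fun k => k < j), D k) + i.1, by
    have hj : j ∉ Finset.univ.filter (fun k => k < j) := by simp
    have h2 : (∑ k ∈ Finset.univ.filter (fun k => k < j), D k) + D j ≤ ∑ k, D k := by
      calc (∑ k ∈ Finset.univ.filter (fun k => k < j), D k) + D j
          = ∑ k ∈ insert j (Finset.univ.filter (fun k => k < j)), D k := by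
            rw [Finset.sum_insert hj, add_comm]
        _ ≤ ∑ k, D k := Finset.sum_le_sum_of_subset (Finset.subset_univ _)
    have h3 := i.2
    omega⟩

/-- `V` is `(D 0, …, D (r-1))` separable. -/
def IsSeparablePotential {r : ℕ} (d : ℕ) (D : Fin r → ℕ) (hsum : ∑ j, D j = d)
    (V : (Fin d → ℤ) → ℝ) : Prop :=
  ∃ Vj : (j : Fin r) → (Fin (D j) → ℤ) → ℝ,
    ∀ n : Fin d → ℤ, V n = ∑ j, Vj j (fun i => n (blockEmbed D hsum j i))

/-!
For separable `V = V₁ ⊕ V₂` one has `M_V(z₁, z₂) = M_{V₁}(z₁) ⊗ 1 + 1 ⊗ M_{V₂}(z₂)`, so a point of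
the Fermi variety at `λ₀` is a pair `(z₁, z₂)` with `λ₀ ∈ σ(M_{V₁}(z₁)) + σ(M_{V₂}(z₂))`.

Put `z = ε⁻¹ w` and let `ε → 0`: the matrix `ε M(z)` tends to the diagonal matrix of the leading
symbols `∑ⱼ ρʲ_{nⱼ} wⱼ`. For generic `w` these are distinct, so the eigenvalues split into branches,
and by the identity theorem an inclusion of spectra for small `ε` along a line of such `w` is an
equality of characteristic polynomials everywhere.

In a direction `w` where the leading symbol at `n = 0` vanishes and the others do not, which exists
since `d₁ ≥ 2`, a single eigenvalue of `M(z)` stays bounded. It can be prescribed to be any `μ`, and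
it then differs from the corresponding eigenvalue for another potential by the difference of the
averages. Comparing `V₁` with `Y₁` in this way for `μ = λ₀ - β` with `β ∈ σ(M_{V₂}(z₂))` shows that
`σ(M_{V₂ - C}(z₂)) ⊆ σ(M_{Y₂}(z₂))` for all `z₂`, where `C` is the average of `Y₁` minus that of
`V₁`. This settles the second block.

It remains to compare `V₁ + C` with `Y₁` when the second blocks agree. Given a branch `α` of
eigenvalues of the first block, solve `λ₀ - α ∈ σ(M_{Y₂}(z₂))` for `z₂`. For generic directions the
leading symbols of the two blocks cancel for one pair of indices only, and this forces the branch of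
`Y₁` with the same leading symbol as `α` to coincide with `α`.
-/

open Filter Topology Metric
open scoped Polynomial Pointwise Kronecker Matrix

/-! ### Persistence of zeros of holomorphic functions -/

lemma differentiableAt_matrix_det {𝕜 E ι : Type*} [NontriviallyNormedField 𝕜]
    [NormedAddCommGroup E] [NormedSpace 𝕜 E] [Fintype ι] [DecidableEq ι]
    {A : E → Matrix ι ι 𝕜} {x : E} (hA : ∀ i j, DifferentiableAt 𝕜 (fun y => A y i j) x) :
    DifferentiableAt 𝕜 (fun y => (A y).det) x := by
  simp only [Matrix.det_apply]
  exact DifferentiableAt.fun_sum fun σ _ =>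
    (HasFDerivAt.finsetProd fun i _ => (hA (σ i) i).hasFDerivAt).differentiableAt.const_smul _

lemma exists_zero_of_norm_lt_of_le_norm_on_sphere {f : ℂ → ℂ} {c : ℂ} {r m : ℝ}
    (hr : 0 < r) (hf : DiffContOnCl ℂ f (ball c r)) (hc : ‖f c‖ < m)
    (hm : ∀ z ∈ sphere c r, m ≤ ‖f z‖) : ∃ z ∈ closedBall c r, f z = 0 := by
  by_contra! hne
  have hinv : DiffContOnCl ℂ f⁻¹ (ball c r) :=
    hf.inv fun z hz => hne z (closure_ball_subset_closedBall hz)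
  have hcle : ‖(f c)⁻¹‖ ≤ m⁻¹ :=
    norm_le_of_forall_mem_frontier_norm_le isBounded_ball hinv (fun z hz => by
      rw [frontier_ball c hr.ne'] at hz
      simpa using inv_anti₀ ((norm_nonneg _).trans_lt hc) (hm z hz))
      (subset_closure (mem_ball_self hr))
  rw [norm_inv, inv_le_inv₀ (norm_pos_iff.2 (hne c (mem_closedBall_self hr.le)))
    ((norm_nonneg _).trans_lt hc)] at hcle
  exact hc.not_ge hcle

lemma eventually_exists_zero_mem_nhds {X : Type*} [TopologicalSpace X] {F : X → ℂ → ℂ}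
    {x₀ : X} {z₀ : ℂ}
    (hcont : ∀ᶠ p in 𝓝 (x₀, z₀), ContinuousAt (Function.uncurry F) p)
    (hdiff : ∀ᶠ p in 𝓝 (x₀, z₀), DifferentiableAt ℂ (F p.1) p.2)
    (hzero : F x₀ z₀ = 0) (hne : ∀ᶠ z in 𝓝[≠] z₀, F x₀ z ≠ 0) {U : Set ℂ} (hU : U ∈ 𝓝 z₀) :
    ∀ᶠ x in 𝓝 x₀, ∃ z ∈ U, F x z = 0 := by
  rw [nhds_prod_eq] at hcont hdiff
  obtain ⟨P, hP, Q, hQ, hPQ⟩ := eventually_prod_iff.1 (hcont.and hdiff)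
  obtain ⟨r, hr, hball⟩ := nhds_basis_closedBall.mem_iff.1
    (inter_mem (inter_mem hU hQ) (eventually_nhdsWithin_iff.1 hne))
  have hx₀ := hP.self_of_nhds
  have hsphere : ∀ z ∈ sphere z₀ r, F x₀ z ≠ 0 := fun z hz =>
    (hball (sphere_subset_closedBall hz)).2 (ne_of_mem_sphere hz hr.ne')
  have hcont₀ : ContinuousOn (F x₀) (sphere z₀ r) := fun z hz =>
    ((hPQ hx₀ (hball (sphere_subset_closedBall hz)).1.2).2.continuousAt).continuousWithinAt
  obtain ⟨w, hw, hwmin⟩ := (isCompact_sphere z₀ r).exists_isMinOn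
    (NormedSpace.sphere_nonempty.2 hr.le) hcont₀.norm
  have hm : 0 < ‖F x₀ w‖ / 2 := half_pos (norm_pos_iff.2 (hsphere w hw))
  have hlarge : ∀ᶠ x in 𝓝 x₀, ∀ z ∈ sphere z₀ r, ‖F x₀ w‖ / 2 ≤ ‖F x z‖ := by
    refine (isCompact_sphere z₀ r).eventually_forall_of_forall_eventually fun z hz => ?_
    have hlt : ‖F x₀ w‖ / 2 < ‖F x₀ z‖ := by linarith [isMinOn_iff.1 hwmin z hz]
    exact ((hPQ hx₀ (hball (sphere_subset_closedBall hz)).1.2).1.norm.eventually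
      (lt_mem_nhds hlt)).mono fun p hp => hp.le
  have hsmall : ∀ᶠ x in 𝓝 x₀, ‖F x z₀‖ < ‖F x₀ w‖ / 2 := by
    have hlim : ContinuousAt (fun x => F x z₀) x₀ :=
      (hPQ hx₀ hQ.self_of_nhds).1.comp (f := fun x => (x, z₀)) (by fun_prop)
    exact hlim.norm.eventually (gt_mem_nhds (by simpa [hzero] using hm))
  filter_upwards [hP, hlarge, hsmall] with x hx hxl hxs
  have hdx : DifferentiableOn ℂ (F x) (closedBall z₀ r) := fun z hz =>
    (hPQ hx (hball hz).1.2).2.differentiableWithinAt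
  obtain ⟨z, hz, hxz⟩ := exists_zero_of_norm_lt_of_le_norm_on_sphere hr
    (hdx.diffContOnCl_ball subset_rfl) hxs hxl
  exact ⟨z, (hball hz).1.1, hxz⟩

/-! ### Eigenvalues of matrices -/

lemma exists_isRoot_norm_sub_pow_le {K : Type*} [NormedField K] {p : K[X]} (hp : p.Monic)
    (hsplits : p.Splits) (hdeg : p.natDegree ≠ 0) (x : K) :
    ∃ r, p.IsRoot r ∧ ‖x - r‖ ^ p.natDegree ≤ ‖p.eval x‖ := by
  classical
  have hroots : p.roots.toFinset.Nonempty := by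
    rw [Multiset.toFinset_nonempty, ← Multiset.card_pos, ← hsplits.natDegree_eq_card_roots]
    exact Nat.pos_of_ne_zero hdeg
  obtain ⟨r, hr, hmin⟩ := p.roots.toFinset.exists_min_image (fun s => ‖x - s‖) hroots
  refine ⟨r, Polynomial.isRoot_of_mem_roots (Multiset.mem_toFinset.1 hr), ?_⟩
  calc ‖x - r‖ ^ p.natDegree = (p.roots.map fun _ => ‖x - r‖).prod := by
        rw [Multiset.map_const', Multiset.prod_replicate, hsplits.natDegree_eq_card_roots]
    _ ≤ (p.roots.map fun s => ‖x - s‖).prod :=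
        Multiset.prod_map_le_prod_map₀ _ _ (fun _ _ => norm_nonneg _)
          fun s hs => hmin s (Multiset.mem_toFinset.2 hs)
    _ = ‖p.eval x‖ := by
        rw [hsplits.eval_eq_prod_roots_of_monic hp]
        simpa using (map_multiset_prod (normHom (α := K)) (p.roots.map fun s => x - s)).symm

section Charpoly

variable {K ι : Type*} [Field K] [Fintype ι] [DecidableEq ι] {A B : Matrix ι ι K} {a : ι → K}

lemma charpoly_eq_prod_X_sub_C_of_mem_spectrum (ha : Function.Injective a)
    (hA : ∀ n, a n ∈ spectrum K A) : A.charpoly = ∏ n, (Polynomial.X - Polynomial.C (a n)) := by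
  refine Polynomial.eq_of_monic_of_dvd_of_natDegree_le
    (Polynomial.monic_prod_of_monic _ _ fun n _ => Polynomial.monic_X_sub_C _) A.charpoly_monic
    (Fintype.prod_dvd_of_coprime (Polynomial.pairwise_coprime_X_sub_C ha) fun n =>
      Polynomial.dvd_iff_isRoot.2 (Matrix.mem_spectrum_iff_isRoot_charpoly.1 (hA n))) ?_
  simp [Matrix.charpoly_natDegree_eq_dim]

lemma spectrum_eq_range_of_injective (ha : Function.Injective a)
    (hA : ∀ n, a n ∈ spectrum K A) : spectrum K A = Set.range a := by
  ext μ
  rw [Matrix.mem_spectrum_iff_isRoot_charpoly, charpoly_eq_prod_X_sub_C_of_mem_spectrum ha hA]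
  simp only [Polynomial.isRoot_prod, Polynomial.root_X_sub_C, Finset.mem_univ, true_and,
    Set.mem_range]

lemma charpoly_eq_of_spectrum_subset (ha : Function.Injective a) (hA : ∀ n, a n ∈ spectrum K A)
    (hAB : spectrum K A ⊆ spectrum K B) : A.charpoly = B.charpoly := by
  rw [charpoly_eq_prod_X_sub_C_of_mem_spectrum ha hA,
    charpoly_eq_prod_X_sub_C_of_mem_spectrum ha fun n => hAB (hA n)]

end Charpoly

lemma eventually_nhds_injective {ι Y : Type*} [Finite ι] [TopologicalSpace Y] [T2Space Y]
    {e : ι → Y} (he : Function.Injective e) : ∀ᶠ f in 𝓝 e, Function.Injective f := by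
  have hne : ∀ᶠ f in 𝓝 e, ∀ m n, m ≠ n → f m ≠ f n := by
    simp only [eventually_all]
    exact fun m n hmn =>
      (isOpen_ne_fun (continuous_apply m) (continuous_apply n)).mem_nhds (he.ne hmn)
  exact hne.mono fun f hf m n => not_imp_not.1 (hf m n)

theorem exists_eigenvalue_branches {X ι : Type*} [Fintype ι] [DecidableEq ι] {l : Filter X}
    {A : X → Matrix ι ι ℂ} {A₀ : Matrix ι ι ℂ} {e : ι → ℂ} (hA : Tendsto A l (𝓝 A₀))
    (he : Function.Injective e) (heA : ∀ n, e n ∈ spectrum ℂ A₀) :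
    ∃ a : X → ι → ℂ, Tendsto a l (𝓝 e) ∧
      ∀ᶠ x in l, Function.Injective (a x) ∧ spectrum ℂ (A x) = Set.range (a x) := by
  have hroot (x : X) (n : ι) : ∃ μ ∈ spectrum ℂ (A x),
      ‖e n - μ‖ ^ Fintype.card ι ≤ ‖(A x).charpoly.eval (e n)‖ := by
    have : Nonempty ι := ⟨n⟩
    have hcard := (A x).charpoly_natDegree_eq_dim
    obtain ⟨μ, hμ, hle⟩ := exists_isRoot_norm_sub_pow_le (A x).charpoly_monic
      (IsAlgClosed.splits _) (hcard ▸ Fintype.card_ne_zero) (e n)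
    exact ⟨μ, Matrix.mem_spectrum_iff_isRoot_charpoly.2 hμ, hcard ▸ hle⟩
  choose a haA hle using hroot
  have hlim : Tendsto a l (𝓝 e) := by
    refine tendsto_pi_nhds.2 fun n => Metric.tendsto_nhds.2 fun δ hδ => ?_
    have hcont : Continuous fun M : Matrix ι ι ℂ => M.charpoly.eval (e n) := by
      simp only [Matrix.eval_charpoly]
      fun_prop
    have hsmall : Tendsto (fun x => (A x).charpoly.eval (e n)) l (𝓝 0) := by
      have := (hcont.tendsto A₀).comp hA
      rwa [Matrix.mem_spectrum_iff_isRoot_charpoly.1 (heA n)] at this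
    filter_upwards [hsmall.norm.eventually_lt_const
      (by simpa using pow_pos hδ (Fintype.card ι))] with x hx
    rw [dist_comm, dist_eq_norm]
    exact lt_of_pow_lt_pow_left₀ _ hδ.le ((hle x n).trans_lt hx)
  have hinj := hlim.eventually (eventually_nhds_injective he)
  exact ⟨a, hlim, hinj.mono fun x hx => ⟨hx, spectrum_eq_range_of_injective hx (haA x)⟩⟩

section Kronecker

lemma kronecker_mulVec_mul {R ι κ : Type*} [CommSemiring R] [Fintype ι] [Fintype κ]
    (A : Matrix ι ι R) (B : Matrix κ κ R) (v : ι → R) (w : κ → R) :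
    (A ⊗ₖ B).mulVec (fun p => v p.1 * w p.2) = fun p => A.mulVec v p.1 * B.mulVec w p.2 := by
  ext p
  simp only [Matrix.mulVec, dotProduct, Matrix.kroneckerMap_apply, Fintype.sum_prod_type,
    Finset.sum_mul_sum, mul_mul_mul_comm]

variable {K : Type*} [Field K]

lemma spectrum_add_subset_of_commute {E : Type*} [IsAlgClosed K] [AddCommGroup E] [Module K E]
    [FiniteDimensional K E] {f g : Module.End K E} (hfg : Commute f g) :
    spectrum K (f + g) ⊆ spectrum K f + spectrum K g := by
  intro μ hμ
  have hmaps : Set.MapsTo f ((f + g).eigenspace μ) ((f + g).eigenspace μ) :=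
    Module.End.mapsTo_genEigenspace_of_comm ((Commute.refl f).add_left hfg.symm) μ 1
  have : Nontrivial ((f + g).eigenspace μ) :=
    (Submodule.nontrivial_iff_ne_bot).2 (Module.End.hasEigenvalue_iff_mem_spectrum.2 hμ)
  obtain ⟨α, hα⟩ := Module.End.exists_eigenvalue (f.restrict hmaps)
  obtain ⟨⟨v, hv⟩, hαv⟩ := hα.exists_hasEigenvector
  have hv0 : v ≠ 0 := fun h => hαv.2 (Subtype.ext h)
  have hfv : f v = α • v := congrArg Subtype.val hαv.apply_eq_smul
  have hgv : g v = (μ - α) • v := by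
    rw [sub_smul, ← hfv, ← Module.End.mem_eigenspace_iff.1 hv, LinearMap.add_apply,
      add_sub_cancel_left]
  refine Set.mem_add.2 ⟨α, ?_, μ - α, ?_, add_sub_cancel α μ⟩
  · exact (Module.End.hasEigenvalue_of_hasEigenvector
      ⟨Module.End.mem_eigenspace_iff.2 hfv, hv0⟩).mem_spectrum
  · exact (Module.End.hasEigenvalue_of_hasEigenvector
      ⟨Module.End.mem_eigenspace_iff.2 hgv, hv0⟩).mem_spectrum

variable {ι κ : Type*} [Fintype ι] [DecidableEq ι] [Fintype κ] [DecidableEq κ]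

lemma mem_spectrum_iff_exists_mulVec_eq_smul {A : Matrix ι ι K} {μ : K} :
    μ ∈ spectrum K A ↔ ∃ v, v ≠ 0 ∧ A.mulVec v = μ • v := by
  rw [← Matrix.spectrum_toLin', ← Module.End.hasEigenvalue_iff_mem_spectrum]
  refine ⟨fun h => ?_, fun ⟨v, hv, hAv⟩ => ?_⟩
  · obtain ⟨v, hv⟩ := h.exists_hasEigenvector
    exact ⟨v, hv.2, hv.apply_eq_smul⟩
  · exact Module.End.hasEigenvalue_of_hasEigenvector ⟨Module.End.mem_eigenspace_iff.2 hAv, hv⟩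

lemma spectrum_kronecker_one_subset (A : Matrix ι ι K) :
    spectrum K (A ⊗ₖ (1 : Matrix κ κ K)) ⊆ spectrum K A := by
  simpa using AlgHom.spectrum_apply_subset
    ((Matrix.kroneckerAlgEquiv ι κ K).toAlgHom.comp Algebra.TensorProduct.includeLeft) A

lemma spectrum_one_kronecker_subset (B : Matrix κ κ K) :
    spectrum K ((1 : Matrix ι ι K) ⊗ₖ B) ⊆ spectrum K B := by
  simpa using AlgHom.spectrum_apply_subset
    ((Matrix.kroneckerAlgEquiv ι κ K).toAlgHom.comp Algebra.TensorProduct.includeRight) B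

theorem spectrum_kronecker_sum [IsAlgClosed K] (A : Matrix ι ι K) (B : Matrix κ κ K) :
    spectrum K (A ⊗ₖ (1 : Matrix κ κ K) + (1 : Matrix ι ι K) ⊗ₖ B)
      = spectrum K A + spectrum K B := by
  refine Set.Subset.antisymm ?_ ?_
  · have hcomm : Commute (A ⊗ₖ (1 : Matrix κ κ K)) ((1 : Matrix ι ι K) ⊗ₖ B) := by
      simp [Commute, SemiconjBy, ← Matrix.mul_kronecker_mul]
    rw [← Matrix.spectrum_toLin', map_add]
    refine (spectrum_add_subset_of_commute (hcomm.map Matrix.toLinAlgEquiv')).trans ?_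
    exact Set.add_subset_add ((Matrix.spectrum_toLin' _).trans_subset
      (spectrum_kronecker_one_subset A)) ((Matrix.spectrum_toLin' _).trans_subset
      (spectrum_one_kronecker_subset B))
  · rintro _ ⟨α, hα, β, hβ, rfl⟩
    obtain ⟨v, hv, hAv⟩ := mem_spectrum_iff_exists_mulVec_eq_smul.1 hα
    obtain ⟨w, hw, hBw⟩ := mem_spectrum_iff_exists_mulVec_eq_smul.1 hβ
    refine mem_spectrum_iff_exists_mulVec_eq_smul.2 ⟨fun p => v p.1 * w p.2, ?_, ?_⟩
    · obtain ⟨i, hi⟩ := Function.ne_iff.1 hv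
      obtain ⟨k, hk⟩ := Function.ne_iff.1 hw
      exact Function.ne_iff.2 ⟨(i, k), mul_ne_zero hi hk⟩
    · rw [Matrix.add_mulVec, kronecker_mulVec_mul, kronecker_mulVec_mul, hAv, hBw]
      ext p
      simp only [Matrix.one_mulVec, Pi.add_apply, Pi.smul_apply, smul_eq_mul]
      ring

end Kronecker

/-! ### Laurent matrices -/

lemma exists_forall_dotProduct_ne_zero {K α κ : Type*} [Field K] [Infinite K] [Finite α]
    [Fintype κ] {l : α → κ → K} (hl : ∀ i, l i ≠ 0) : ∃ u, ∀ i, l i ⬝ᵥ u ≠ 0 := by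
  refine Module.Dual.exists_forall_ne_zero_of_forall_exists
    (fun i => LinearMap.proj i ∘ₗ (Matrix.of l).mulVecLin) fun i => ?_
  by_contra! h
  exact hl i (dotProduct_eq_zero _ h)

/-- The matrix `diag(∑ⱼ (r n j * z j + (r n j * z j)⁻¹)) + B`. The Floquet matrix of a periodic
potential is of this form, with roots of unity `r n j` and `B` independent of `z`. -/
def laurentMatrix {ι κ : Type*} [DecidableEq ι] [Fintype κ] (r : Matrix ι κ ℂ)
    (B : Matrix ι ι ℂ) (z : κ → ℂ) : Matrix ι ι ℂ :=
  Matrix.diagonal (fun n => ∑ j, (r n j * z j + (r n j * z j)⁻¹)) + B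

/-- The matrix `ε • laurentMatrix r B (ε⁻¹ • w)`, written so that it remains meaningful at `ε = 0`,
where it is the diagonal matrix of leading symbols `r *ᵥ w`. It describes `laurentMatrix r B z` as
`z` tends to infinity. -/
def rescaledLaurentMatrix {ι κ : Type*} [DecidableEq ι] [Fintype κ] (r : Matrix ι κ ℂ)
    (B : Matrix ι ι ℂ) (ε : ℂ) (w : κ → ℂ) : Matrix ι ι ℂ :=
  Matrix.diagonal (fun n => ∑ j, (r n j * w j + ε ^ 2 * (r n j * w j)⁻¹)) + ε • B

section Laurent

variable {ι κ : Type*} [DecidableEq ι] [Fintype κ] (r : Matrix ι κ ℂ) (B : Matrix ι ι ℂ)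

lemma rescaledLaurentMatrix_one (w : κ → ℂ) :
    rescaledLaurentMatrix r B 1 w = laurentMatrix r B w := by
  simp [rescaledLaurentMatrix, laurentMatrix]

lemma rescaledLaurentMatrix_zero (w : κ → ℂ) :
    rescaledLaurentMatrix r B 0 w = Matrix.diagonal (r *ᵥ w) := by
  simp [rescaledLaurentMatrix, Matrix.mulVec, dotProduct]

lemma rescaledLaurentMatrix_eq_smul {ε : ℂ} (hε : ε ≠ 0) (w : κ → ℂ) :
    rescaledLaurentMatrix r B ε w = ε • laurentMatrix r B (ε⁻¹ • w) := by
  rw [rescaledLaurentMatrix, laurentMatrix, smul_add, ← Matrix.diagonal_smul]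
  congr 2
  ext n
  simp only [Pi.smul_apply, smul_eq_mul, Finset.mul_sum]
  refine Finset.sum_congr rfl fun j _ => ?_
  simp only [mul_inv, inv_inv]
  field_simp

lemma laurentMatrix_add_smul_one (C : ℂ) (z : κ → ℂ) :
    laurentMatrix r (B + C • 1) z = laurentMatrix r B z + C • 1 :=
  (add_assoc _ _ _).symm

variable {r B}

lemma differentiableAt_rescaledLaurentMatrix {E : Type*} [NormedAddCommGroup E]
    [NormedSpace ℂ E] (hr : ∀ n j, r n j ≠ 0) {ε : E → ℂ} {w : E → κ → ℂ} {x : E}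
    (hε : DifferentiableAt ℂ ε x) (hw : DifferentiableAt ℂ w x) (hw₀ : ∀ j, w x j ≠ 0) (m n : ι) :
    DifferentiableAt ℂ (fun y => rescaledLaurentMatrix r B (ε y) (w y) m n) x := by
  have hinv (j : κ) : DifferentiableAt ℂ (fun y => (r m j * w y j)⁻¹) x :=
    ((differentiableAt_pi.1 hw j).const_mul _).inv (mul_ne_zero (hr m j) (hw₀ j))
  have hlin (j : κ) : DifferentiableAt ℂ (fun y => r m j * w y j) x :=
    (differentiableAt_pi.1 hw j).const_mul _
  simp only [rescaledLaurentMatrix, Matrix.add_apply, Matrix.diagonal_apply, Matrix.smul_apply,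
    smul_eq_mul]
  split_ifs
  · exact (DifferentiableAt.fun_sum fun j _ => (hlin j).add ((hε.pow 2).mul (hinv j))).add
      (hε.mul_const _)
  · fun_prop

variable [Fintype ι]

lemma mem_spectrum_rescaledLaurentMatrix_iff {ε : ℂ} (hε : ε ≠ 0) {w : κ → ℂ} {μ : ℂ} :
    ε * μ ∈ spectrum ℂ (rescaledLaurentMatrix r B ε w) ↔
      μ ∈ spectrum ℂ (laurentMatrix r B (ε⁻¹ • w)) := by
  rw [rescaledLaurentMatrix_eq_smul r B hε]
  exact spectrum.smul_mem_smul_iff (r := Units.mk0 ε hε)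

lemma mem_spectrum_laurentMatrix_add_smul_one_iff {C μ : ℂ} {z : κ → ℂ} :
    μ ∈ spectrum ℂ (laurentMatrix r (B + C • 1) z) ↔ μ - C ∈ spectrum ℂ (laurentMatrix r B z) := by
  rw [laurentMatrix_add_smul_one, ← Algebra.algebraMap_eq_smul_one]
  nth_rewrite 1 [← sub_add_cancel μ C]
  rw [add_comm]
  exact spectrum.add_mem_add_iff

end Laurent

lemma isPreconnected_setOf_line_ne_zero {κ : Type*} [Finite κ] {u : κ → ℂ} (hu : ∀ j, u j ≠ 0)
    (v : κ → ℂ) : IsPreconnected {ε : ℂ | ∀ j, (u + ε • v) j ≠ 0} := by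
  have hsub (j : κ) : {ε : ℂ | (u + ε • v) j = 0}.Subsingleton := by
    intro ε (hε : u j + ε * v j = 0) ε' (hε' : u j + ε' * v j = 0)
    have hv : v j ≠ 0 := fun h => hu j (by simpa [h] using hε)
    exact mul_right_cancel₀ hv (add_left_cancel (hε.trans hε'.symm))
  have hcompl : {ε : ℂ | ∀ j, (u + ε • v) j ≠ 0} = (⋃ j, {ε : ℂ | (u + ε • v) j = 0})ᶜ := by
    ext; simp
  rw [hcompl]
  exact ((Set.countable_iUnion fun j => (hsub j).countable).isPathConnected_compl_of_one_lt_rank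
    (Complex.rank_real_complex ▸ Nat.one_lt_ofNat)).isConnected.isPreconnected

lemma tendsto_add_smul_nhdsNE_zero {κ : Type*} (u v : κ → ℂ) :
    Tendsto (fun ε : ℂ => u + ε • v) (𝓝[≠] 0) (𝓝 u) := by
  have hcont : Continuous fun ε : ℂ => u + ε • v := by fun_prop
  simpa using (hcont.tendsto 0).mono_left nhdsWithin_le_nhds

section LaurentRay

variable {ι κ : Type*} [DecidableEq ι] [Fintype κ] {r : Matrix ι κ ℂ} {B B' : Matrix ι ι ℂ}
  {u z : κ → ℂ}

lemma tendsto_rescaledLaurentMatrix (hr : ∀ n j, r n j ≠ 0) (hu : ∀ j, u j ≠ 0) {X : Type*}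
    {l : Filter X} {ε : X → ℂ} {w : X → κ → ℂ} (hε : Tendsto ε l (𝓝 0)) (hw : Tendsto w l (𝓝 u)) :
    Tendsto (fun x => rescaledLaurentMatrix r B (ε x) (w x)) l (𝓝 (Matrix.diagonal (r *ᵥ u))) := by
  have hcont : ContinuousAt (fun p : ℂ × (κ → ℂ) => rescaledLaurentMatrix r B p.1 p.2) (0, u) :=
    continuousAt_pi.2 fun m => continuousAt_pi.2 fun n =>
      (differentiableAt_rescaledLaurentMatrix hr differentiableAt_fst differentiableAt_snd hu
        m n).continuousAt
  simpa only [rescaledLaurentMatrix_zero, Function.comp_def] using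
    hcont.tendsto.comp (hε.prodMk_nhds hw)

variable [Fintype ι]

theorem exists_rescaledLaurentMatrix_branches (hr : ∀ n j, r n j ≠ 0) (hu : ∀ j, u j ≠ 0)
    (hinj : Function.Injective (r *ᵥ u)) (B : Matrix ι ι ℂ) {X : Type*} {l : Filter X} {ε : X → ℂ}
    {w : X → κ → ℂ} (hε : Tendsto ε l (𝓝 0)) (hw : Tendsto w l (𝓝 u)) :
    ∃ a : X → ι → ℂ, Tendsto a l (𝓝 (r *ᵥ u)) ∧ ∀ᶠ x in l, Function.Injective (a x) ∧
      spectrum ℂ (rescaledLaurentMatrix r B (ε x) (w x)) = Set.range (a x) :=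
  exists_eigenvalue_branches (tendsto_rescaledLaurentMatrix hr hu hε hw) hinj
    fun n => by simp [spectrum_diagonal]

lemma analyticOnNhd_eval_charpoly_rescaledLaurentMatrix (hr : ∀ n j, r n j ≠ 0)
    (B : Matrix ι ι ℂ) (u v : κ → ℂ) (μ : ℂ) :
    AnalyticOnNhd ℂ (fun ε => (rescaledLaurentMatrix r B ε (u + ε • v)).charpoly.eval μ)
      {ε | ∀ j, (u + ε • v) j ≠ 0} := by
  have hopen : IsOpen {ε : ℂ | ∀ j, (u + ε • v) j ≠ 0} := by
    simp only [Set.ofPred_forall]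
    exact isOpen_iInter_of_finite fun j => isOpen_ne_fun (by fun_prop) continuous_const
  refine DifferentiableOn.analyticOnNhd (fun ε hε => ?_) hopen
  simp only [Matrix.eval_charpoly]
  refine (differentiableAt_matrix_det fun m n => ?_).differentiableWithinAt
  exact (differentiableAt_const _).sub
    (differentiableAt_rescaledLaurentMatrix (ε := fun ε => ε) (w := fun ε => u + ε • v) hr
      (by fun_prop) (by fun_prop) hε m n)

theorem charpoly_laurentMatrix_eq_of_spectrum_subset_along_ray (hr : ∀ n j, r n j ≠ 0)
    (hu : ∀ j, u j ≠ 0) (hinj : Function.Injective (r *ᵥ u)) (hz : ∀ j, z j ≠ 0)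
    (hsub : ∀ᶠ ε in 𝓝[≠] (0 : ℂ), spectrum ℂ (rescaledLaurentMatrix r B ε (u + ε • (z - u))) ⊆
      spectrum ℂ (rescaledLaurentMatrix r B' ε (u + ε • (z - u)))) :
    (laurentMatrix r B z).charpoly = (laurentMatrix r B' z).charpoly := by
  obtain ⟨a, -, ha⟩ := exists_rescaledLaurentMatrix_branches hr hu hinj B
    (tendsto_id.mono_left nhdsWithin_le_nhds) (tendsto_add_smul_nhdsNE_zero u (z - u))
  have hcharpoly : ∀ᶠ ε in 𝓝[≠] (0 : ℂ),
      (rescaledLaurentMatrix r B ε (u + ε • (z - u))).charpoly =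
        (rescaledLaurentMatrix r B' ε (u + ε • (z - u))).charpoly := by
    filter_upwards [ha, hsub] with ε ⟨hainj, hspec⟩ hε
    exact charpoly_eq_of_spectrum_subset hainj (fun n => hspec ▸ Set.mem_range_self n) hε
  refine Polynomial.funext fun μ => ?_
  have heq := (analyticOnNhd_eval_charpoly_rescaledLaurentMatrix hr B u (z - u)
    μ).eqOn_of_preconnected_of_frequently_eq
    (analyticOnNhd_eval_charpoly_rescaledLaurentMatrix hr B' u (z - u) μ)
    (isPreconnected_setOf_line_ne_zero hu _) (z₀ := 0) (by simpa using hu)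
    (hcharpoly.mono fun ε hε => congrArg (Polynomial.eval μ) hε).frequently
  simpa [rescaledLaurentMatrix_one] using heq (x := 1) (by simpa using hz)

end LaurentRay

lemma eventually_cofinite_notMem_range_add_smul {K ι : Type*} [Field K] [Finite ι] {b : ι → K}
    (hb : ∀ n, b n ≠ 0) (a : ι → K) (μ : K) : ∀ᶠ t : K in cofinite, μ ∉ Set.range (a + t • b) := by
  simp only [Set.mem_range, not_exists, eventually_all]
  intro n
  refine Set.Subsingleton.finite fun t ht t' ht' => ?_
  simp only [Pi.add_apply, Pi.smul_apply, smul_eq_mul, Set.mem_compl_iff, Set.mem_ofPred_eq,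
    not_not] at ht ht'
  exact mul_right_cancel₀ (hb n) (add_left_cancel (ht.trans ht'.symm))

theorem eventually_exists_mem_spectrum_rescaledLaurentMatrix {ι κ : Type*} [DecidableEq ι]
    [Fintype ι] [Fintype κ] [Nonempty κ] {r : Matrix ι κ ℂ} (hr : ∀ n j, r n j ≠ 0)
    (B : Matrix ι ι ℂ) {v : κ → ℂ} (hv : ∀ j, v j ≠ 0) (n : ι) {U : Set (κ → ℂ)} (hU : U ∈ 𝓝 v) :
    ∀ᶠ p in 𝓝 ((0 : ℂ), (r *ᵥ v) n),
      ∃ w ∈ U, p.2 ∈ spectrum ℂ (rescaledLaurentMatrix r B p.1 w) := by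
  classical
  obtain ⟨j⟩ := ‹Nonempty κ›
  set line : ℂ → κ → ℂ := fun t => v + t • Pi.single j 1 with hline
  have hline_cont : Continuous line := by fun_prop
  have hline_zero : line 0 = v := by simp [hline]
  set F : ℂ × ℂ → ℂ → ℂ := fun p t =>
    (p.2 • (1 : Matrix ι ι ℂ) - rescaledLaurentMatrix r B p.1 (line t)).det
  have hF_zero (p : ℂ × ℂ) (t : ℂ) :
      F p t = 0 ↔ p.2 ∈ spectrum ℂ (rescaledLaurentMatrix r B p.1 (line t)) := by
    rw [spectrum.mem_iff, Matrix.isUnit_iff_isUnit_det, isUnit_iff_ne_zero, not_not,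
      Algebra.algebraMap_eq_smul_one]
  have hdiff : ∀ᶠ p in 𝓝 (((0 : ℂ), (r *ᵥ v) n), (0 : ℂ)),
      DifferentiableAt ℂ (Function.uncurry F) p := by
    have hne : ∀ᶠ p : (ℂ × ℂ) × ℂ in 𝓝 ((0, (r *ᵥ v) n), 0), ∀ i, line p.2 i ≠ 0 :=
      eventually_all.2 fun i => ((continuous_apply i).comp (hline_cont.comp continuous_snd)
        ).continuousAt.eventually_ne (by simpa [hline_zero] using hv i)
    filter_upwards [hne] with p hp
    refine differentiableAt_matrix_det fun m m' => ?_
    refine DifferentiableAt.sub (by simp only [Matrix.smul_apply]; fun_prop) ?_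
    exact differentiableAt_rescaledLaurentMatrix (ε := fun p : (ℂ × ℂ) × ℂ => p.1.1)
      (w := fun p => line p.2) hr (by fun_prop) (by fun_prop) hp m m'
  have hmem : r.mulVec v n ∈ spectrum ℂ (rescaledLaurentMatrix r B 0 v) := by
    simp [rescaledLaurentMatrix_zero, spectrum_diagonal]
  have hisolated : ∀ᶠ t in 𝓝[≠] (0 : ℂ), F (0, (r *ᵥ v) n) t ≠ 0 := by
    refine ((eventually_cofinite_notMem_range_add_smul (fun m => hr m j) (r *ᵥ v)
      ((r *ᵥ v) n)).filter_mono (nhdsNE_le_cofinite 0)).mono fun t ht hFt => ht ?_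
    have hmem := (hF_zero _ _).1 hFt
    rwa [rescaledLaurentMatrix_zero, spectrum_diagonal, Matrix.mulVec_add, Matrix.mulVec_smul,
      Matrix.mulVec_single_one] at hmem
  filter_upwards [eventually_exists_zero_mem_nhds (hdiff.mono fun p hp => hp.continuousAt)
    (hdiff.mono fun p hp => hp.comp p.2 (f := fun t => (p.1, t)) (by fun_prop))
    ((hF_zero _ _).2 (hline_zero ▸ hmem)) hisolated
    (hline_cont.continuousAt.preimage_mem_nhds (hline_zero ▸ hU))] with p ⟨t, ht, hpt⟩
  exact ⟨line t, ht, (hF_zero p t).1 hpt⟩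

section Generic

variable {K ι κ : Type*} [Field K] [Infinite K] [Finite ι] [Fintype κ] {r : Matrix ι κ K}

lemma exists_sum_eq_one_injective_mulVec [Nonempty κ] (hr : Function.Injective r.row) :
    ∃ y : κ → K, (∀ j, y j ≠ 0) ∧ ∑ j, y j = 1 ∧ Function.Injective (r *ᵥ y) := by
  classical
  obtain ⟨y, hy⟩ := exists_forall_dotProduct_ne_zero
    (l := Sum.elim (fun j => Pi.single j 1)
      (Sum.elim (fun _ : Unit => 1) fun p : {p : ι × ι // p.1 ≠ p.2} =>
        r.row p.1.1 - r.row p.1.2))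
    (K := K) (by
      rintro (j | _ | ⟨p, hp⟩)
      · simp
      · exact one_ne_zero
      · exact sub_ne_zero.2 (hr.ne hp))
  simp only [Sum.forall, Sum.elim_inl, Sum.elim_inr, single_one_dotProduct, one_dotProduct,
    sub_dotProduct, sub_ne_zero, Subtype.forall, Prod.forall, forall_const] at hy
  obtain ⟨hcoord, hsum, hrow⟩ := hy
  refine ⟨(∑ j, y j)⁻¹ • y, fun j => mul_ne_zero (inv_ne_zero hsum) (hcoord j), ?_, ?_⟩
  · simp [← Finset.mul_sum, hsum]
  · intro m n hmn
    rw [Matrix.mulVec_smul] at hmn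
    exact not_imp_not.1 (hrow m n) (mul_left_cancel₀ (inv_ne_zero hsum) hmn)

lemma exists_mulVec_eq_mul_mulVec_imp {α : Type*} [Finite α] (hr₀ : ∀ n, r.row n ≠ 0)
    (hr : ∀ m n (s : K), r.row m = s • r.row n → m = n) (t : α → K) :
    ∃ u : κ → K, (∀ j, u j ≠ 0) ∧ (∀ n, (r *ᵥ u) n ≠ 0) ∧
      ∀ m n k, (r *ᵥ u) m = t k * (r *ᵥ u) n → m = n ∧ t k = 1 := by
  classical
  obtain ⟨u, hu⟩ := exists_forall_dotProduct_ne_zero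
    (l := Sum.elim (fun j => Pi.single j 1) (Sum.elim r.row
      fun p : {p : ι × ι × α // ¬ (p.1 = p.2.1 ∧ t p.2.2 = 1)} =>
        r.row p.1.1 - t p.1.2.2 • r.row p.1.2.1))
    (K := K) (by
      rintro (j | n | ⟨⟨m, n, k⟩, hp⟩)
      · simp
      · exact hr₀ n
      · intro h
        have h' : r.row m = t k • r.row n := sub_eq_zero.1 h
        obtain rfl := hr m n _ h'
        exact hp ⟨rfl, smul_left_injective K (hr₀ m) (by simpa using h'.symm)⟩)
  simp only [Sum.forall, Sum.elim_inl, Sum.elim_inr, single_one_dotProduct, sub_dotProduct,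
    smul_dotProduct, smul_eq_mul, sub_ne_zero, Subtype.forall, Prod.forall] at hu
  exact ⟨u, hu.1, hu.2.1, fun m n k => not_imp_not.1 (hu.2.2 m n k)⟩

end Generic

lemma eventually_forall_eq_imp_of_tendsto {X Y α β : Type*} [Finite α] [Finite β]
    [TopologicalSpace Y] [T2Space Y] {l : Filter X} {a : X → α → Y} {b : X → β → Y}
    {a₀ : α → Y} {b₀ : β → Y} (ha : Tendsto a l (𝓝 a₀)) (hb : Tendsto b l (𝓝 b₀)) :
    ∀ᶠ x in l, ∀ m k, a x m = b x k → a₀ m = b₀ k := by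
  simp only [eventually_all]
  intro m k
  by_cases h : a₀ m = b₀ k
  · exact .of_forall fun _ _ => h
  · have hlim := (tendsto_pi_nhds.1 ha m).prodMk_nhds (tendsto_pi_nhds.1 hb k)
    exact (hlim.eventually (isClosed_diagonal.isOpen_compl.mem_nhds h)).mono
      fun x hx hx' => absurd hx' hx

theorem eventually_eq_of_mem_spectrum_rescaledLaurentMatrix_imp {X α ι κ : Type*} [Finite α]
    [DecidableEq ι] [Fintype ι] [Fintype κ] [Nonempty κ] {r : Matrix ι κ ℂ}
    (hr : ∀ n j, r n j ≠ 0) {B : Matrix ι ι ℂ} {v : κ → ℂ} (hv : ∀ j, v j ≠ 0)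
    (hinj : Function.Injective (r *ᵥ v)) {l : Filter X} {ε s : X → ℂ} {t : X → α → ℂ} {t₀ : α → ℂ}
    {m : α} {n : ι} (hε : Tendsto ε l (𝓝 0)) (hs : Tendsto s l (𝓝 ((r *ᵥ v) n)))
    (ht : Tendsto t l (𝓝 t₀)) (hres : ∀ i k, t₀ i = (r *ᵥ v) k → i = m ∧ k = n)
    (himp : ∀ᶠ x in l, ∀ w : κ → ℂ, (∀ j, w j ≠ 0) →
      s x ∈ spectrum ℂ (rescaledLaurentMatrix r B (ε x) w) →
      ∃ i, t x i ∈ spectrum ℂ (rescaledLaurentMatrix r B (ε x) w)) :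
    ∀ᶠ x in l, s x = t x m := by
  obtain ⟨b, hb, hspec⟩ := exists_rescaledLaurentMatrix_branches hr hv hinj B
    (hε.comp (tendsto_fst (g := 𝓝 v))) tendsto_snd
  have hsb := eventually_forall_eq_imp_of_tendsto
    (tendsto_pi_nhds.2 fun _ : Unit => hs.comp (tendsto_fst (g := 𝓝 v))) hb
  have htb := eventually_forall_eq_imp_of_tendsto (ht.comp tendsto_fst) hb
  have hw : ∀ᶠ p : X × (κ → ℂ) in l ×ˢ 𝓝 v, ∀ j, p.2 j ≠ 0 :=
    eventually_all.2 fun j => (tendsto_pi_nhds.1 tendsto_snd j).eventually_ne (hv j)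
  obtain ⟨P, hP, Q, hQ, hPQ⟩ := eventually_prod_iff.1 (hspec.and (hsb.and (htb.and hw)))
  have hsolve := (hε.prodMk_nhds hs).eventually
    (eventually_exists_mem_spectrum_rescaledLaurentMatrix hr B hv n hQ)
  filter_upwards [hP, himp, hsolve] with x hPx hx ⟨w, hQw, hsw⟩
  obtain ⟨⟨-, hrange⟩, hsx, htx, hw⟩ := hPQ hPx hQw
  obtain ⟨i, hi⟩ := hx w hw hsw
  simp only [Function.comp_apply] at hrange
  obtain ⟨k, hk⟩ := hrange ▸ hsw
  obtain ⟨k', hk'⟩ := hrange ▸ hi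
  obtain rfl := hinj (hsx () k hk.symm)
  obtain ⟨rfl, rfl⟩ := hres i k' (htx i k' hk'.symm)
  exact hk.symm.trans hk'

lemma charpoly_laurentMatrix_eq_of_spectrum_subset {ι κ : Type*} [DecidableEq ι] [Fintype ι]
    [Fintype κ] [Nonempty κ] {r : Matrix ι κ ℂ} {B B' : Matrix ι ι ℂ} (hr : ∀ n j, r n j ≠ 0)
    (hrow : Function.Injective r.row)
    (hsub : ∀ z, (∀ j, z j ≠ 0) →
      spectrum ℂ (laurentMatrix r B z) ⊆ spectrum ℂ (laurentMatrix r B' z))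
    {z : κ → ℂ} (hz : ∀ j, z j ≠ 0) :
    (laurentMatrix r B z).charpoly = (laurentMatrix r B' z).charpoly := by
  obtain ⟨u, hu, -, hinj⟩ := exists_sum_eq_one_injective_mulVec hrow
  refine charpoly_laurentMatrix_eq_of_spectrum_subset_along_ray hr hu hinj hz ?_
  have hw : ∀ᶠ ε in 𝓝[≠] (0 : ℂ), ∀ j, (u + ε • (z - u)) j ≠ 0 :=
    eventually_all.2 fun j =>
      (tendsto_pi_nhds.1 (tendsto_add_smul_nhdsNE_zero u (z - u)) j).eventually_ne (hu j)
  filter_upwards [hw, self_mem_nhdsWithin] with ε hwε hε μ hμ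
  rw [← mul_inv_cancel_left₀ hε μ, mem_spectrum_rescaledLaurentMatrix_iff hε] at hμ ⊢
  exact hsub _ (fun j => mul_ne_zero (inv_ne_zero hε) (hwε j)) hμ

/-! ### Balanced directions -/

lemma exists_apply_eq_zero_of_eventually_zero_imp {α : Type*} {S : Set α} (hS : S.Finite)
    {F : ℂ × ℂ → ℂ} {G : α → ℂ × ℂ → ℂ} {p₀ : ℂ × ℂ}
    (hF : ∀ᶠ p in 𝓝 p₀, DifferentiableAt ℂ F p) (hG : ∀ a, ContinuousAt (G a) p₀)
    (hzero : F p₀ = 0) (hne : ∀ᶠ x in 𝓝[≠] p₀.2, F (p₀.1, x) ≠ 0)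
    (himp : ∀ᶠ p in 𝓝 p₀, p.1 ≠ p₀.1 → F p = 0 → ∃ a ∈ S, G a p = 0) :
    ∃ a ∈ S, G a p₀ = 0 := by
  by_contra! hG₀
  have hGne : ∀ᶠ p in 𝓝 p₀, ∀ a ∈ S, G a p ≠ 0 :=
    (eventually_all_finite hS).2 fun a ha => (hG a).eventually_ne (hG₀ a ha)
  obtain ⟨ε₀, x₀⟩ := p₀
  have hall := himp.and hGne
  rw [nhds_prod_eq] at hall
  obtain ⟨P, hP, Q, hQ, hPQ⟩ := eventually_prod_iff.1 hall
  have hsolve : ∀ᶠ ε in 𝓝 ε₀, ∃ x ∈ {x | Q x}, F (ε, x) = 0 :=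
    eventually_exists_zero_mem_nhds (F := fun ε x => F (ε, x))
      (hF.mono fun p hp => hp.continuousAt)
      (hF.mono fun p hp => hp.comp p.2 (f := fun x => (p.1, x)) (by fun_prop)) hzero hne hQ
  obtain ⟨ε, ⟨⟨x, hx, hεx⟩, hPε⟩, hε⟩ := (((hsolve.and hP).filter_mono
    nhdsWithin_le_nhds).and (self_mem_nhdsWithin (s := {ε₀}ᶜ))).exists
  obtain ⟨hzimp, hGx⟩ := hPQ hPε hx
  obtain ⟨a, ha, hax⟩ := hzimp hε hεx
  exact hGx a ha hax

lemma exists_sum_eq_zero_forall_dotProduct_ne_zero {K α κ : Type*} [Field K] [Infinite K]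
    [Finite α] [Fintype κ] [Nonempty κ] {l : α → κ → K} (hl : ∀ i s, l i ≠ fun _ => s) :
    ∃ u, ∑ j, u j = 0 ∧ ∀ i, l i ⬝ᵥ u ≠ 0 := by
  classical
  obtain ⟨k⟩ := ‹Nonempty κ›
  obtain ⟨w, hw⟩ := exists_forall_dotProduct_ne_zero (l := fun i => l i - fun _ => l i k)
    fun i => sub_ne_zero.2 (hl i _)
  refine ⟨w - Pi.single k (∑ j, w j), by simp, fun i => ?_⟩
  have hconst : (fun _ : κ => l i k) ⬝ᵥ w = l i k * ∑ j, w j := by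
    simp only [dotProduct, Finset.mul_sum]
  rw [dotProduct_sub, dotProduct_single, ← hconst, ← sub_dotProduct]
  exact hw i

lemma exists_sum_eq_zero_mulVec_ne_zero {K ι κ : Type*} [Field K] [Infinite K] [Finite ι]
    [Fintype κ] [Nontrivial κ] {r : Matrix ι κ K} {o : ι}
    (hrow : ∀ m n (s : K), r.row m = s • r.row n → m = n) (ho : r.row o = 1) :
    ∃ u : κ → K, ∑ j, u j = 0 ∧ (∀ j, u j ≠ 0) ∧ ∀ n ≠ o, (r *ᵥ u) n ≠ 0 := by
  classical
  obtain ⟨u, hu, hne⟩ := exists_sum_eq_zero_forall_dotProduct_ne_zero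
    (l := Sum.elim (fun j => Pi.single j 1) fun n : {n // n ≠ o} => r.row n) (K := K) (by
      rintro (j | ⟨n, hn⟩) s h
      · obtain ⟨k, hk⟩ := exists_ne j
        simpa [hk] using (congrFun h j).trans (congrFun h k).symm
      · refine hn (hrow n o s (h.trans ?_))
        rw [ho]
        ext
        simp)
  refine ⟨u, hu, fun j => ?_, fun n hn => hne (.inr ⟨n, hn⟩)⟩
  simpa using hne (.inl j)

lemma det_updateRow_diagonal {R ι : Type*} [CommRing R] [DecidableEq ι] [Fintype ι] (d : ι → R)
    (i : ι) (b : ι → R) :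
    ((Matrix.diagonal d).updateRow i b).det = b i * ∏ j ∈ Finset.univ.erase i, d j := by
  rw [← Matrix.cramer_transpose_apply, Matrix.diagonal_transpose, Matrix.cramer_eq_adjugate_mulVec,
    Matrix.adjugate_diagonal, Matrix.mulVec_diagonal, mul_comm]

/-- The matrix `rescaledLaurentMatrix r B ε (u + (ε * x) • c)` with its row `o` divided by `ε`.
When the row `o` of `r` consists of ones, `∑ j, u j = 0` and `∑ j, c j = 1`, this division is exact,
and the resulting row stays meaningful at `ε = 0`. -/
def balancedLaurentMatrix {ι κ : Type*} [DecidableEq ι] [Fintype κ] (r : Matrix ι κ ℂ)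
    (B : Matrix ι ι ℂ) (o : ι) (u c : κ → ℂ) (ε x : ℂ) : Matrix ι ι ℂ :=
  (rescaledLaurentMatrix r B ε (u + (ε * x) • c)).updateRow o
    (Pi.single o (x + ε * ∑ j, ((u + (ε * x) • c) j)⁻¹) + B o)

section Balanced

variable {ι κ : Type*} [DecidableEq ι] [Fintype ι] [Fintype κ] {r : Matrix ι κ ℂ}
  {B B' : Matrix ι ι ℂ} {o : ι} {u c : κ → ℂ} {ε x μ : ℂ}

lemma det_rescaledLaurentMatrix_eq_mul_det_balancedLaurentMatrix (ho : r.row o = 1)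
    (hu : ∑ j, u j = 0) (hc : ∑ j, c j = 1) :
    (rescaledLaurentMatrix r B ε (u + (ε * x) • c)).det =
      ε * (balancedLaurentMatrix r B o u c ε x).det := by
  rw [balancedLaurentMatrix, ← Matrix.det_updateRow_smul, ← Matrix.updateRow_eq_self
    (rescaledLaurentMatrix r B ε (u + (ε * x) • c)) o, Matrix.updateRow_idem]
  congr 2
  have ho' (j : κ) : r o j = 1 := congrFun ho j
  ext n
  simp only [rescaledLaurentMatrix, Matrix.add_apply, Matrix.diagonal_apply, ho', one_mul,
    Finset.sum_add_distrib, Pi.add_apply, Pi.smul_apply, smul_eq_mul, ← Finset.mul_sum, hu, hc,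
    Matrix.smul_apply, Pi.single_apply, eq_comm (a := o)]
  split_ifs <;> ring

lemma mem_spectrum_laurentMatrix_iff_det_balancedLaurentMatrix (ho : r.row o = 1)
    (hu : ∑ j, u j = 0) (hc : ∑ j, c j = 1) (hε : ε ≠ 0) :
    μ ∈ spectrum ℂ (laurentMatrix r B (ε⁻¹ • (u + (ε * x) • c))) ↔
      (balancedLaurentMatrix r (B + -μ • 1) o u c ε x).det = 0 := by
  calc μ ∈ spectrum ℂ (laurentMatrix r B (ε⁻¹ • (u + (ε * x) • c)))
      ↔ 0 ∈ spectrum ℂ (laurentMatrix r (B + -μ • 1) (ε⁻¹ • (u + (ε * x) • c))) := by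
        rw [mem_spectrum_laurentMatrix_add_smul_one_iff, zero_sub, neg_neg]
    _ ↔ 0 ∈ spectrum ℂ (rescaledLaurentMatrix r (B + -μ • 1) ε (u + (ε * x) • c)) := by
        rw [← mem_spectrum_rescaledLaurentMatrix_iff hε, mul_zero]
    _ ↔ (rescaledLaurentMatrix r (B + -μ • 1) ε (u + (ε * x) • c)).det = 0 := by
        rw [spectrum.zero_mem_iff, Matrix.isUnit_iff_isUnit_det, isUnit_iff_ne_zero, not_not]
    _ ↔ (balancedLaurentMatrix r (B + -μ • 1) o u c ε x).det = 0 := by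
        rw [det_rescaledLaurentMatrix_eq_mul_det_balancedLaurentMatrix ho hu hc,
          mul_eq_zero_iff_left hε]

lemma det_balancedLaurentMatrix_zero : (balancedLaurentMatrix r B o u c 0 x).det =
    (x + B o o) * ∏ n ∈ Finset.univ.erase o, (r *ᵥ u) n := by
  simp [balancedLaurentMatrix, rescaledLaurentMatrix_zero, det_updateRow_diagonal]

lemma differentiableAt_det_balancedLaurentMatrix (hr : ∀ n j, r n j ≠ 0) {p : ℂ × ℂ}
    (hp : ∀ j, (u + (p.1 * p.2) • c) j ≠ 0) :
    DifferentiableAt ℂ (fun p : ℂ × ℂ => (balancedLaurentMatrix r B o u c p.1 p.2).det) p := by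
  refine differentiableAt_matrix_det fun m n => ?_
  by_cases hm : m = o
  · subst hm
    have hinv (j : κ) : DifferentiableAt ℂ (fun p : ℂ × ℂ => ((u + (p.1 * p.2) • c) j)⁻¹) p :=
      DifferentiableAt.inv (by simp only [Pi.add_apply, Pi.smul_apply]; fun_prop) (hp j)
    simp only [balancedLaurentMatrix, Matrix.updateRow_self, Pi.add_apply, Pi.single_apply]
    split_ifs <;> fun_prop
  · simp only [balancedLaurentMatrix, Matrix.updateRow_ne hm]
    exact differentiableAt_rescaledLaurentMatrix (ε := fun p : ℂ × ℂ => p.1)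
      (w := fun p => u + (p.1 * p.2) • c) hr (by fun_prop) (by fun_prop) hp m n

theorem sub_add_diag_mem_of_mem_spectrum_laurentMatrix_imp [Nontrivial κ]
    (hr : ∀ n j, r n j ≠ 0) (hrow : ∀ m n (s : ℂ), r.row m = s • r.row n → m = n)
    (ho : r.row o = 1) {F : Set ℂ} (hF : F.Finite)
    (himp : ∀ z, (∀ j, z j ≠ 0) → μ ∈ spectrum ℂ (laurentMatrix r B z) →
      ∃ μ' ∈ F, μ' ∈ spectrum ℂ (laurentMatrix r B' z)) :
    (μ - B o o) + B' o o ∈ F := by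
  obtain ⟨u, hu, hu₀, hun⟩ := exists_sum_eq_zero_mulVec_ne_zero hrow ho
  obtain ⟨c, hc⟩ : ∃ c : κ → ℂ, ∑ j, c j = 1 := by
    classical exact ⟨Pi.single (Classical.arbitrary κ) 1, by simp⟩
  have hw : ∀ᶠ p in 𝓝 ((0 : ℂ), μ - B o o), ∀ j, (u + (p.1 * p.2) • c) j ≠ 0 := by
    have hcont : Continuous fun p : ℂ × ℂ => u + (p.1 * p.2) • c := by fun_prop
    exact eventually_all.2 fun j => ((continuous_apply j).comp hcont).continuousAt.eventually_ne
      (by simpa using hu₀ j)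
  have hprod : ∏ n ∈ Finset.univ.erase o, (r *ᵥ u) n ≠ 0 :=
    Finset.prod_ne_zero_iff.2 fun n hn => hun n (Finset.ne_of_mem_erase hn)
  have hzero (M : Matrix ι ι ℂ) (ν x : ℂ) :
      (balancedLaurentMatrix r (M + -ν • 1) o u c 0 x).det = 0 ↔ x + M o o = ν := by
    rw [det_balancedLaurentMatrix_zero, mul_eq_zero_iff_right hprod, ← sub_eq_zero (b := ν)]
    simp [sub_eq_add_neg, add_assoc]
  have himp' : ∀ᶠ p in 𝓝 ((0 : ℂ), μ - B o o), p.1 ≠ 0 →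
      (balancedLaurentMatrix r (B + -μ • 1) o u c p.1 p.2).det = 0 →
      ∃ ν ∈ F, (balancedLaurentMatrix r (B' + -ν • 1) o u c p.1 p.2).det = 0 := by
    filter_upwards [hw] with p hp hε hdet
    simp only [← mem_spectrum_laurentMatrix_iff_det_balancedLaurentMatrix ho hu hc hε] at hdet ⊢
    exact himp _ (fun j => mul_ne_zero (inv_ne_zero hε) (hp j)) hdet
  obtain ⟨μ', hμ', hdet⟩ := exists_apply_eq_zero_of_eventually_zero_imp hF
    (hw.mono fun p hp => differentiableAt_det_balancedLaurentMatrix hr hp)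
    (fun ν => (differentiableAt_det_balancedLaurentMatrix hr hw.self_of_nhds).continuousAt)
    ((hzero _ _ _).2 (sub_add_cancel _ _))
    (eventually_mem_nhdsWithin.mono fun x hx h =>
      hx (eq_sub_of_add_eq ((hzero _ _ _).1 h)))
    himp'
  rwa [(hzero _ _ _).1 hdet]

end Balanced

/-! ### Sums of two spectra -/

section TwoBlocks

variable {ι₁ κ₁ ι₂ κ₂ : Type*} [DecidableEq ι₁] [Fintype ι₁] [Fintype κ₁] [DecidableEq ι₂]
  [Fintype ι₂] [Fintype κ₂] {r₁ : Matrix ι₁ κ₁ ℂ} {r₂ : Matrix ι₂ κ₂ ℂ} {B₁ B₁' : Matrix ι₁ ι₁ ℂ}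
  {B₂ B₂' : Matrix ι₂ ι₂ ℂ} {o₁ : ι₁} {o₂ : ι₂} {ν : ℂ}

lemma mul_mem_spectrum_rescaledLaurentMatrix_add_iff {ε : ℂ} (hε : ε ≠ 0) {w₁ : κ₁ → ℂ}
    {w₂ : κ₂ → ℂ} :
    ε * ν ∈ spectrum ℂ (rescaledLaurentMatrix r₁ B₁ ε w₁) +
        spectrum ℂ (rescaledLaurentMatrix r₂ B₂ ε w₂) ↔
      ν ∈ spectrum ℂ (laurentMatrix r₁ B₁ (ε⁻¹ • w₁)) +
        spectrum ℂ (laurentMatrix r₂ B₂ (ε⁻¹ • w₂)) := by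
  simp only [Set.mem_add]
  constructor
  · rintro ⟨α, hα, β, hβ, hαβ⟩
    refine ⟨ε⁻¹ * α, ?_, ε⁻¹ * β, ?_, ?_⟩
    · rwa [← mem_spectrum_rescaledLaurentMatrix_iff hε, mul_inv_cancel_left₀ hε]
    · rwa [← mem_spectrum_rescaledLaurentMatrix_iff hε, mul_inv_cancel_left₀ hε]
    · rw [← mul_add, hαβ, inv_mul_cancel_left₀ hε]
  · rintro ⟨α, hα, β, hβ, rfl⟩
    exact ⟨ε * α, (mem_spectrum_rescaledLaurentMatrix_iff hε).2 hα, ε * β,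
      (mem_spectrum_rescaledLaurentMatrix_iff hε).2 hβ, (mul_add _ _ _).symm⟩

/- The eigenvalue `ε * ν - a ε n` of the second block can be prescribed near the direction
`-(r₁ *ᵥ u) n • y`; in that direction the leading symbols of the two blocks cancel only for the
pair `(n, o₂)`, which forces the branch `a' ε n` to agree with `a ε n`. -/
lemma eventually_spectrum_rescaledLaurentMatrix_subset [Nonempty κ₂] (hr₁ : ∀ n j, r₁ n j ≠ 0)
    (hr₂ : ∀ n j, r₂ n j ≠ 0) {u : κ₁ → ℂ} {y : κ₂ → ℂ} (hu : ∀ j, u j ≠ 0) (hy : ∀ j, y j ≠ 0)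
    (hyinj : Function.Injective (r₂ *ᵥ y)) (hyo : (r₂ *ᵥ y) o₂ = 1) (hun : ∀ n, (r₁ *ᵥ u) n ≠ 0)
    (hres : ∀ m n k, (r₁ *ᵥ u) m = (r₂ *ᵥ y) k * (r₁ *ᵥ u) n → m = n ∧ k = o₂)
    (himp : ∀ ε w₁ w₂, ε ≠ 0 → (∀ j, w₁ j ≠ 0) → (∀ j, w₂ j ≠ 0) →
      ε * ν ∈ spectrum ℂ (rescaledLaurentMatrix r₁ B₁ ε w₁) +
        spectrum ℂ (rescaledLaurentMatrix r₂ B₂ ε w₂) →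
      ε * ν ∈ spectrum ℂ (rescaledLaurentMatrix r₁ B₁' ε w₁) +
        spectrum ℂ (rescaledLaurentMatrix r₂ B₂ ε w₂))
    {w : ℂ → κ₁ → ℂ} (hw : Tendsto w (𝓝[≠] 0) (𝓝 u)) :
    ∀ᶠ ε in 𝓝[≠] (0 : ℂ), spectrum ℂ (rescaledLaurentMatrix r₁ B₁ ε (w ε)) ⊆
      spectrum ℂ (rescaledLaurentMatrix r₁ B₁' ε (w ε)) := by
  have hinj : Function.Injective (r₁ *ᵥ u) := fun m n h =>
    (hres m n o₂ (by rw [hyo, one_mul, h])).1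
  have hε : Tendsto (fun ε : ℂ => ε) (𝓝[≠] 0) (𝓝 0) := tendsto_id.mono_left nhdsWithin_le_nhds
  have hεν : Tendsto (fun ε => ε * ν) (𝓝[≠] 0) (𝓝 0) := by simpa using hε.mul_const ν
  obtain ⟨a, ha, hspec⟩ := exists_rescaledLaurentMatrix_branches hr₁ hu hinj B₁ hε hw
  obtain ⟨a', ha', hspec'⟩ := exists_rescaledLaurentMatrix_branches hr₁ hu hinj B₁' hε hw
  have hw₀ : ∀ᶠ ε in 𝓝[≠] (0 : ℂ), ∀ j, w ε j ≠ 0 :=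
    eventually_all.2 fun j => (tendsto_pi_nhds.1 hw j).eventually_ne (hu j)
  have hmatch (n : ι₁) : ∀ᶠ ε in 𝓝[≠] (0 : ℂ), a ε n = a' ε n := by
    have hen := neg_ne_zero.2 (hun n)
    have hv : r₂ *ᵥ (-(r₁ *ᵥ u) n • y) = -(r₁ *ᵥ u) n • (r₂ *ᵥ y) := Matrix.mulVec_smul ..
    refine (eventually_eq_of_mem_spectrum_rescaledLaurentMatrix_imp hr₂ (B := B₂)
      (v := -(r₁ *ᵥ u) n • y) (s := fun ε => ε * ν - a ε n) (t := fun ε m => ε * ν - a' ε m)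
      (t₀ := -(r₁ *ᵥ u)) (m := n) (n := o₂) (fun j => mul_ne_zero hen (hy j)) ?_ hε ?_ ?_ ?_
      ?_).mono fun ε h => sub_right_injective h
    · rw [hv]
      exact (smul_right_injective _ hen).comp hyinj
    · rw [hv, Pi.smul_apply, hyo, smul_eq_mul, mul_one, ← zero_sub]
      exact hεν.sub (tendsto_pi_nhds.1 ha n)
    · exact tendsto_pi_nhds.2 fun m => by simpa using hεν.sub (tendsto_pi_nhds.1 ha' m)
    · intro m k hmk
      refine hres m n k (neg_injective ?_)
      rwa [hv, Pi.smul_apply, smul_eq_mul, neg_mul, mul_comm] at hmk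
    · filter_upwards [hspec, hspec', hw₀, self_mem_nhdsWithin] with ε hsp hsp' hwε hε₀ v hv hmem
      obtain ⟨α, hα, β, hβ, hαβ⟩ := himp ε (w ε) v hε₀ hwε hv
        ⟨a ε n, hsp.2 ▸ Set.mem_range_self n, _, hmem, add_sub_cancel _ _⟩
      obtain ⟨m, rfl⟩ := hsp'.2 ▸ hα
      exact ⟨m, by rwa [← hαβ, add_sub_cancel_left]⟩
  filter_upwards [hspec, hspec', eventually_all.2 hmatch] with ε hsp hsp' hε
  rw [hsp.2, hsp'.2, funext hε]

theorem charpoly_laurentMatrix_eq_of_mem_spectrum_add_imp [Nonempty κ₁] [Nonempty κ₂]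
    (hr₁ : ∀ n j, r₁ n j ≠ 0) (hrow₁ : ∀ m n (s : ℂ), r₁.row m = s • r₁.row n → m = n)
    (hr₂ : ∀ n j, r₂ n j ≠ 0) (hrow₂ : Function.Injective r₂.row) (ho₂ : r₂.row o₂ = 1)
    (himp : ∀ z₁ z₂, (∀ j, z₁ j ≠ 0) → (∀ j, z₂ j ≠ 0) →
      ν ∈ spectrum ℂ (laurentMatrix r₁ B₁ z₁) + spectrum ℂ (laurentMatrix r₂ B₂ z₂) →
      ν ∈ spectrum ℂ (laurentMatrix r₁ B₁' z₁) + spectrum ℂ (laurentMatrix r₂ B₂ z₂))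
    {z : κ₁ → ℂ} (hz : ∀ j, z j ≠ 0) :
    (laurentMatrix r₁ B₁ z).charpoly = (laurentMatrix r₁ B₁' z).charpoly := by
  obtain ⟨y, hy, hysum, hyinj⟩ := exists_sum_eq_one_injective_mulVec hrow₂
  have hyo : (r₂ *ᵥ y) o₂ = 1 :=
    (congrArg (· ⬝ᵥ y) ho₂).trans ((one_dotProduct y).trans hysum)
  obtain ⟨u, hu, hun, hres⟩ := exists_mulVec_eq_mul_mulVec_imp (r := r₁)
    (fun n h => hr₁ n (Classical.arbitrary κ₁) (congrFun h _)) hrow₁ (r₂ *ᵥ y)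
  have hres' (m n k) (h : (r₁ *ᵥ u) m = (r₂ *ᵥ y) k * (r₁ *ᵥ u) n) : m = n ∧ k = o₂ :=
    ⟨(hres m n k h).1, hyinj ((hres m n k h).2.trans hyo.symm)⟩
  have hinj : Function.Injective (r₁ *ᵥ u) := fun m n h =>
    (hres m n o₂ (by rw [hyo, one_mul, h])).1
  refine charpoly_laurentMatrix_eq_of_spectrum_subset_along_ray hr₁ hu hinj hz
    (eventually_spectrum_rescaledLaurentMatrix_subset hr₁ hr₂ hu hy hyinj hyo hun hres' (B₂ := B₂)
      (ν := ν) (fun ε w₁ w₂ hε hw₁ hw₂ => ?_) (tendsto_add_smul_nhdsNE_zero u _))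
  simp only [mul_mem_spectrum_rescaledLaurentMatrix_add_iff hε]
  exact himp _ _ (fun j => mul_ne_zero (inv_ne_zero hε) (hw₁ j)) fun j =>
    mul_ne_zero (inv_ne_zero hε) (hw₂ j)

lemma spectrum_laurentMatrix_subset_of_mem_spectrum_add_imp [Nontrivial κ₁]
    (hr₁ : ∀ n j, r₁ n j ≠ 0) (hrow₁ : ∀ m n (s : ℂ), r₁.row m = s • r₁.row n → m = n)
    (ho₁ : r₁.row o₁ = 1) {z₂ : κ₂ → ℂ}
    (himp : ∀ z₁, (∀ j, z₁ j ≠ 0) →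
      ν ∈ spectrum ℂ (laurentMatrix r₁ B₁ z₁) + spectrum ℂ (laurentMatrix r₂ B₂ z₂) →
      ν ∈ spectrum ℂ (laurentMatrix r₁ B₁' z₁) + spectrum ℂ (laurentMatrix r₂ B₂' z₂)) :
    spectrum ℂ (laurentMatrix r₂ (B₂ + (B₁ o₁ o₁ - B₁' o₁ o₁) • 1) z₂) ⊆
      spectrum ℂ (laurentMatrix r₂ B₂' z₂) := by
  intro γ hγ
  obtain ⟨β, rfl⟩ : ∃ β, γ = β + (B₁ o₁ o₁ - B₁' o₁ o₁) := ⟨_, (sub_add_cancel _ _).symm⟩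
  rw [mem_spectrum_laurentMatrix_add_smul_one_iff, add_sub_cancel_right] at hγ
  have hmem := sub_add_diag_mem_of_mem_spectrum_laurentMatrix_imp (μ := ν - β) (B := B₁)
    (B' := B₁') hr₁ hrow₁ ho₁
    ((Matrix.finite_spectrum (laurentMatrix r₂ B₂' z₂)).image fun β' => ν - β') (by
      intro z₁ hz₁ hα
      obtain ⟨α', hα', β', hβ', rfl⟩ := himp z₁ hz₁ ⟨_, hα, β, hγ, sub_add_cancel _ _⟩
      exact ⟨α', ⟨β', hβ', add_sub_cancel_right _ _⟩, hα'⟩)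
  obtain ⟨β', hβ', h⟩ := hmem
  convert hβ' using 1
  linear_combination h

theorem charpoly_laurentMatrix_add_smul_one_eq_of_mem_spectrum_add_imp [Nontrivial κ₁]
    [Nonempty κ₂] (hr₁ : ∀ n j, r₁ n j ≠ 0)
    (hrow₁ : ∀ m n (s : ℂ), r₁.row m = s • r₁.row n → m = n) (ho₁ : r₁.row o₁ = 1)
    (hr₂ : ∀ n j, r₂ n j ≠ 0) (hrow₂ : Function.Injective r₂.row) (ho₂ : r₂.row o₂ = 1)
    (himp : ∀ z₁ z₂, (∀ j, z₁ j ≠ 0) → (∀ j, z₂ j ≠ 0) →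
      ν ∈ spectrum ℂ (laurentMatrix r₁ B₁ z₁) + spectrum ℂ (laurentMatrix r₂ B₂ z₂) →
      ν ∈ spectrum ℂ (laurentMatrix r₁ B₁' z₁) + spectrum ℂ (laurentMatrix r₂ B₂' z₂)) :
    (∀ z, (∀ j, z j ≠ 0) →
      (laurentMatrix r₁ (B₁ + (B₁' o₁ o₁ - B₁ o₁ o₁) • 1) z).charpoly =
        (laurentMatrix r₁ B₁' z).charpoly) ∧
    ∀ z, (∀ j, z j ≠ 0) →
      (laurentMatrix r₂ (B₂ + (B₁ o₁ o₁ - B₁' o₁ o₁) • 1) z).charpoly =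
        (laurentMatrix r₂ B₂' z).charpoly := by
  have hblock₂ (z : κ₂ → ℂ) (hz : ∀ j, z j ≠ 0) :
      (laurentMatrix r₂ (B₂ + (B₁ o₁ o₁ - B₁' o₁ o₁) • 1) z).charpoly =
        (laurentMatrix r₂ B₂' z).charpoly :=
    charpoly_laurentMatrix_eq_of_spectrum_subset hr₂ hrow₂ (fun z₂ hz₂ =>
      spectrum_laurentMatrix_subset_of_mem_spectrum_add_imp hr₁ hrow₁ ho₁
        fun z₁ hz₁ => himp z₁ z₂ hz₁ hz₂) hz
  refine ⟨fun z hz => charpoly_laurentMatrix_eq_of_mem_spectrum_add_imp (ν := ν) hr₁ hrow₁ hr₂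
    hrow₂ ho₂ (B₂ := B₂') (fun z₁ z₂ hz₁ hz₂ hmem => himp z₁ z₂ hz₁ hz₂ ?_) hz, hblock₂⟩
  obtain ⟨α, hα, β, hβ, rfl⟩ := hmem
  rw [mem_spectrum_laurentMatrix_add_smul_one_iff] at hα
  rw [Matrix.mem_spectrum_iff_isRoot_charpoly, ← hblock₂ z₂ hz₂,
    ← Matrix.mem_spectrum_iff_isRoot_charpoly, mem_spectrum_laurentMatrix_add_smul_one_iff] at hβ
  exact ⟨_, hα, _, hβ, by ring⟩

end TwoBlocks

/-! ### Floquet matrices -/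

/-- The roots of unity `rho d q j (n j)` as a matrix; its row `n` consists of the coefficients of
the leading symbol of the diagonal entry at `n` of the Floquet matrix. -/
def rootMatrix (d : ℕ) (q : Fin d → ℕ) : Matrix (Cell d q) (Fin d) ℂ :=
  fun n j => rho d q j (n j : ℕ)

/-- The part of the Floquet matrix that does not depend on `z`, the matrix `V̂(n - n')`. -/
def dftMatrix (d : ℕ) (q : Fin d → ℕ) (V : (Fin d → ℤ) → ℝ) : Matrix (Cell d q) (Cell d q) ℂ :=
  fun n n' => dft d q V fun j => ((n j : ℕ) : ℤ) - ((n' j : ℕ) : ℤ)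

/-- The splitting of a cell in `ℤ^(d1 + d2)` into its two blocks of coordinates. -/
def cellSplit (d1 d2 : ℕ) (q : Fin (d1 + d2) → ℕ) :
    Cell (d1 + d2) q ≃ Cell d1 (fun i => q (Fin.castAdd d2 i)) ×
      Cell d2 (fun i => q (Fin.natAdd d1 i)) where
  toFun n := (fun i => n (Fin.castAdd d2 i), fun i => n (Fin.natAdd d1 i))
  invFun p := Fin.addCases (motive := fun i => Fin (q i)) p.1 p.2
  left_inv n := by
    funext i
    refine Fin.addCases (fun i => ?_) (fun i => ?_) i <;> simp
  right_inv p := by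
    ext i <;> simp

section Roots

variable {d : ℕ} {q : Fin d → ℕ}

lemma rho_ne_zero (j : Fin d) (m : ℤ) : rho d q j m ≠ 0 := Complex.exp_ne_zero _

lemma rho_natCast (j : Fin d) (m : ℕ) :
    rho d q j m = Complex.exp (2 * Real.pi * I / q j) ^ m := by
  rw [rho, ← Complex.exp_nat_mul]
  push_cast
  ring_nf

lemma rho_natCast_pow (hq : ∀ j, 0 < q j) (j : Fin d) (m : ℕ) : rho d q j m ^ q j = 1 := by
  rw [rho_natCast, pow_right_comm, (isPrimitiveRoot_exp _ (hq j).ne').pow_eq_one, one_pow]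

lemma rho_injective (hq : ∀ j, 0 < q j) (j : Fin d) :
    Function.Injective fun m : Fin (q j) => rho d q j (m : ℕ) := by
  intro m m' h
  simp only [rho_natCast] at h
  exact Fin.ext ((isPrimitiveRoot_exp _ (hq j).ne').pow_inj m.2 m'.2 h)

lemma injective_row_rootMatrix (hq : ∀ j, 0 < q j) :
    Function.Injective (rootMatrix d q).row := fun _ _ h =>
  funext fun j => rho_injective hq j (congrFun h j)

lemma eq_of_row_rootMatrix_eq_smul (hq : ∀ j, 0 < q j) (hgcd : Finset.univ.gcd q = 1)
    (m n : Cell d q) (s : ℂ) (h : (rootMatrix d q).row m = s • (rootMatrix d q).row n) : m = n := by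
  have hs (j : Fin d) : s ^ q j = 1 := by
    have hj : rho d q j (m j : ℕ) = s * rho d q j (n j : ℕ) := congrFun h j
    simpa [mul_pow, rho_natCast_pow hq] using (congrArg (· ^ q j) hj).symm
  have hdvd : orderOf s ∣ Finset.univ.gcd q :=
    Finset.dvd_gcd fun j _ => orderOf_dvd_of_pow_eq_one (hs j)
  rw [hgcd, Nat.dvd_one, orderOf_eq_one_iff] at hdvd
  exact injective_row_rootMatrix hq (by rw [h, hdvd, one_smul])

end Roots

section Floquet

variable {d : ℕ} {q : Fin d → ℕ} {V Y : (Fin d → ℤ) → ℝ} {z : Fin d → ℂ}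

lemma rootMatrix_ne_zero (n : Cell d q) (j : Fin d) : rootMatrix d q n j ≠ 0 := rho_ne_zero _ _

lemma row_rootMatrix_zero (hq : ∀ j, 0 < q j) :
    (rootMatrix d q).row (fun j => ⟨0, hq j⟩) = 1 := by
  ext j
  simp [rootMatrix, rho]

lemma floquetMatrix_eq_laurentMatrix :
    floquetMatrix d q V z = laurentMatrix (rootMatrix d q) (dftMatrix d q V) z :=
  rfl

lemma floquetDet_eq_eval_charpoly (lam : ℂ) : floquetDet d q V z lam =
    (-1) ^ Fintype.card (Cell d q) * (floquetMatrix d q V z).charpoly.eval lam := by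
  rw [floquetDet, Matrix.eval_charpoly, ← Matrix.det_neg, neg_sub, Matrix.smul_one_eq_diagonal,
    Matrix.scalar_apply]

lemma floquetDet_eq_zero_iff {lam : ℂ} :
    floquetDet d q V z lam = 0 ↔ lam ∈ spectrum ℂ (floquetMatrix d q V z) := by
  rw [floquetDet_eq_eval_charpoly, mul_eq_zero_iff_left (pow_ne_zero _ (by norm_num)),
    Matrix.mem_spectrum_iff_isRoot_charpoly, Polynomial.IsRoot]

lemma floquetIsospectral_of_charpoly_eq (h : ∀ z, (∀ j, z j ≠ 0) →
    (floquetMatrix d q V z).charpoly = (floquetMatrix d q Y z).charpoly) :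
    FloquetIsospectral d q V Y := fun z hz lam => by
  rw [floquetDet_eq_eval_charpoly, floquetDet_eq_eval_charpoly, h z hz]

lemma dftMatrix_apply_self (n : Cell d q) : dftMatrix d q V n n = potentialAvg d q V := by
  simp [dftMatrix, dft, potentialAvg]

lemma dftMatrix_add : dftMatrix d q (fun n => V n + Y n) = dftMatrix d q V + dftMatrix d q Y := by
  ext n n'
  simp only [dftMatrix, dft, Matrix.add_apply, Complex.ofReal_add, add_mul,
    Finset.sum_add_distrib, mul_add]

lemma dft_exp_eq_prod_rho_div_pow (n n' m : Cell d q) :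
    Complex.exp (-(2 * Real.pi * I) *
        ∑ j, ((((n j : ℕ) : ℤ) - ((n' j : ℕ) : ℤ) : ℤ) : ℂ) * ((m j : ℕ) : ℂ) / (q j : ℂ)) =
      ∏ j, (rho d q j (n' j : ℕ) / rho d q j (n j : ℕ)) ^ (m j : ℕ) := by
  rw [Finset.mul_sum, Complex.exp_sum]
  refine Finset.prod_congr rfl fun j _ => ?_
  rw [rho, rho, ← Complex.exp_sub, ← Complex.exp_nat_mul]
  push_cast
  ring_nf

lemma sum_rho_div_pow (hq : ∀ j, 0 < q j) (j : Fin d) (m m' : Fin (q j)) :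
    ∑ k : Fin (q j), (rho d q j (m' : ℕ) / rho d q j (m : ℕ)) ^ (k : ℕ) =
      if m = m' then (q j : ℂ) else 0 := by
  split_ifs with h
  · simp [h, div_self (rho_ne_zero _ _)]
  · have hne : rho d q j (m' : ℕ) / rho d q j (m : ℕ) ≠ 1 := fun h₁ =>
      h (rho_injective hq j (eq_of_div_eq_one h₁).symm)
    rw [Fin.sum_univ_eq_sum_range (fun k => (rho d q j (m' : ℕ) / rho d q j (m : ℕ)) ^ k),
      geom_sum_eq hne, div_pow, rho_natCast_pow hq, rho_natCast_pow hq, div_one, sub_self, zero_div]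

lemma dftMatrix_const (hq : ∀ j, 0 < q j) (C : ℝ) :
    dftMatrix d q (fun _ => C) = (C : ℂ) • 1 := by
  ext n n'
  have hq' : ∏ j, (q j : ℂ) ≠ 0 :=
    Finset.prod_ne_zero_iff.2 fun j _ => Nat.cast_ne_zero.2 (hq j).ne'
  simp only [dftMatrix, dft, dft_exp_eq_prod_rho_div_pow, ← Finset.mul_sum]
  rw [← Fintype.piFinset_univ, ← Finset.prod_univ_sum (fun j => Finset.univ)
    fun j (k : Fin (q j)) => (rho d q j (n' j : ℕ) / rho d q j (n j : ℕ)) ^ (k : ℕ)]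
  simp only [sum_rho_div_pow hq]
  by_cases h : n = n'
  · subst h
    simp only [if_true, Matrix.smul_apply, Matrix.one_apply_eq, smul_eq_mul]
    field_simp
  · obtain ⟨j, hj⟩ := Function.ne_iff.1 h
    have hprod : (∏ j, if n j = n' j then (q j : ℂ) else 0) = 0 :=
      Finset.prod_eq_zero (Finset.mem_univ j) (if_neg hj)
    simp [h, hprod]

lemma dftMatrix_add_const (hq : ∀ j, 0 < q j) (C : ℝ) :
    dftMatrix d q (fun n => V n + C) = dftMatrix d q V + (C : ℂ) • 1 := by
  rw [dftMatrix_add, dftMatrix_const hq]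

end Floquet

section Separable

variable {d1 d2 : ℕ} {q : Fin (d1 + d2) → ℕ} {V1 : (Fin d1 → ℤ) → ℝ} {V2 : (Fin d2 → ℤ) → ℝ}

lemma dftMatrix_mul_of_separated :
    dftMatrix (d1 + d2) q
        (fun n => V1 (fun i => n (Fin.castAdd d2 i)) * V2 (fun i => n (Fin.natAdd d1 i))) =
      (dftMatrix d1 (fun i => q (Fin.castAdd d2 i)) V1 ⊗ₖ
        dftMatrix d2 (fun i => q (Fin.natAdd d1 i)) V2).submatrix
          (cellSplit d1 d2 q) (cellSplit d1 d2 q) := by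
  ext n n'
  simp only [dftMatrix, dft, Matrix.submatrix_apply, Matrix.kroneckerMap_apply]
  rw [mul_mul_mul_comm, Finset.sum_mul_sum, ← (cellSplit d1 d2 q).symm.sum_comp,
    Fintype.sum_prod_type, Fin.prod_univ_add, one_div_mul_one_div]
  congr 1
  refine Finset.sum_congr rfl fun x _ => Finset.sum_congr rfl fun y _ => ?_
  rw [Fin.sum_univ_add, mul_add, Complex.exp_add]
  simp only [cellSplit, Equiv.coe_fn_mk, Equiv.coe_fn_symm_mk, Fin.addCases_left,
    Fin.addCases_right, Complex.ofReal_mul]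
  ring

lemma dftMatrix_add_of_separated (hq : ∀ j, 0 < q j) :
    dftMatrix (d1 + d2) q
        (fun n => V1 (fun i => n (Fin.castAdd d2 i)) + V2 (fun i => n (Fin.natAdd d1 i))) =
      (dftMatrix d1 (fun i => q (Fin.castAdd d2 i)) V1 ⊗ₖ 1 +
        1 ⊗ₖ dftMatrix d2 (fun i => q (Fin.natAdd d1 i)) V2).submatrix
          (cellSplit d1 d2 q) (cellSplit d1 d2 q) := by
  have h₁ := dftMatrix_mul_of_separated (q := q) (V1 := V1) (V2 := fun _ => 1)
  have h₂ := dftMatrix_mul_of_separated (q := q) (V1 := fun _ => 1) (V2 := V2)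
  simp only [mul_one, one_mul, dftMatrix_const fun i => hq (Fin.natAdd d1 i),
    dftMatrix_const fun i => hq (Fin.castAdd d2 i), Complex.ofReal_one, one_smul] at h₁ h₂
  rw [dftMatrix_add, h₁, h₂, Matrix.submatrix_add, Pi.add_apply, Pi.add_apply]

lemma floquetMatrix_append_of_separated (hq : ∀ j, 0 < q j) (z1 : Fin d1 → ℂ) (z2 : Fin d2 → ℂ) :
    floquetMatrix (d1 + d2) q
        (fun n => V1 (fun i => n (Fin.castAdd d2 i)) + V2 (fun i => n (Fin.natAdd d1 i)))
        (Fin.append z1 z2) =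
      (floquetMatrix d1 (fun i => q (Fin.castAdd d2 i)) V1 z1 ⊗ₖ 1 +
        1 ⊗ₖ floquetMatrix d2 (fun i => q (Fin.natAdd d1 i)) V2 z2).submatrix
          (cellSplit d1 d2 q) (cellSplit d1 d2 q) := by
  have hdiag : Matrix.diagonal (fun n => ∑ j, (rootMatrix (d1 + d2) q n j * Fin.append z1 z2 j +
        (rootMatrix (d1 + d2) q n j * Fin.append z1 z2 j)⁻¹)) =
      (Matrix.diagonal (fun n => ∑ j, (rootMatrix d1 _ n j * z1 j +
          (rootMatrix d1 _ n j * z1 j)⁻¹)) ⊗ₖ 1 +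
        1 ⊗ₖ Matrix.diagonal (fun n => ∑ j, (rootMatrix d2 _ n j * z2 j +
          (rootMatrix d2 _ n j * z2 j)⁻¹))).submatrix (cellSplit d1 d2 q) (cellSplit d1 d2 q) := by
    rw [← Matrix.diagonal_one, ← Matrix.diagonal_one, Matrix.diagonal_kronecker_diagonal,
      Matrix.diagonal_kronecker_diagonal, Matrix.diagonal_add, Matrix.submatrix_diagonal_equiv]
    congr 1
    ext n
    simp [Fin.sum_univ_add, rootMatrix, cellSplit, rho]
  simp only [floquetMatrix_eq_laurentMatrix, laurentMatrix, dftMatrix_add_of_separated hq, hdiag,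
    Matrix.add_kronecker, Matrix.kronecker_add, Matrix.submatrix_add, Pi.add_apply]
  exact add_add_add_comm _ _ _ _

lemma spectrum_floquetMatrix_append_of_separated (hq : ∀ j, 0 < q j) (z1 : Fin d1 → ℂ)
    (z2 : Fin d2 → ℂ) :
    spectrum ℂ (floquetMatrix (d1 + d2) q
        (fun n => V1 (fun i => n (Fin.castAdd d2 i)) + V2 (fun i => n (Fin.natAdd d1 i)))
        (Fin.append z1 z2)) =
      spectrum ℂ (floquetMatrix d1 (fun i => q (Fin.castAdd d2 i)) V1 z1) +
        spectrum ℂ (floquetMatrix d2 (fun i => q (Fin.natAdd d1 i)) V2 z2) := by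
  rw [floquetMatrix_append_of_separated hq, ← spectrum_kronecker_sum]
  exact AlgEquiv.spectrum_eq (Matrix.reindexAlgEquiv ℂ ℂ (cellSplit d1 d2 q).symm) _

end Separable

lemma univ_gcd_eq_one_of_pairwise_coprime {ι : Type*} [Fintype ι] [Nontrivial ι] {q : ι → ℕ}
    (hq : Pairwise fun i j => (q i).Coprime (q j)) : Finset.univ.gcd q = 1 := by
  obtain ⟨i, j, hij⟩ := exists_pair_ne ι
  exact Nat.eq_one_of_dvd_coprimes (hq hij) (Finset.gcd_dvd (Finset.mem_univ i))
    (Finset.gcd_dvd (Finset.mem_univ j))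

theorem fermi_isospectral_two_blocks_floquet_isospectral_general
    {d1 d2 : ℕ} (hd1 : 2 ≤ d1) (hd2 : 1 ≤ d2) {q : Fin (d1 + d2) → ℕ} (hq : ∀ j, 0 < q j)
    (hgcd : Finset.univ.gcd (fun i => q (Fin.castAdd d2 i)) = 1)
    {V1 Y1 : (Fin d1 → ℤ) → ℝ} {V2 Y2 : (Fin d2 → ℤ) → ℝ} {lam0 : ℂ}
    (hFermi : ∀ z, (∀ j, z j ≠ 0) →
      floquetDet (d1 + d2) q
        (fun n => V1 (fun i => n (Fin.castAdd d2 i)) + V2 (fun i => n (Fin.natAdd d1 i)))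
        z lam0 = 0 →
      floquetDet (d1 + d2) q
        (fun n => Y1 (fun i => n (Fin.castAdd d2 i)) + Y2 (fun i => n (Fin.natAdd d1 i)))
        z lam0 = 0) :
    ∃ C : ℝ, FloquetIsospectral d1 (fun i => q (Fin.castAdd d2 i)) (fun m => V1 m + C) Y1 ∧
      FloquetIsospectral d2 (fun i => q (Fin.natAdd d1 i)) (fun m => V2 m + -C) Y2 := by
  have : Nontrivial (Fin d1) := Fin.nontrivial_iff_two_le.2 hd1
  have : Nonempty (Fin d2) := Fin.pos_iff_nonempty.1 hd2
  have hq₁ (i : Fin d1) : 0 < q (Fin.castAdd d2 i) := hq _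
  have hq₂ (i : Fin d2) : 0 < q (Fin.natAdd d1 i) := hq _
  obtain ⟨h₁, h₂⟩ := charpoly_laurentMatrix_add_smul_one_eq_of_mem_spectrum_add_imp (ν := lam0)
    (B₁ := dftMatrix d1 _ V1) (B₁' := dftMatrix d1 _ Y1) (B₂ := dftMatrix d2 _ V2)
    (B₂' := dftMatrix d2 _ Y2) rootMatrix_ne_zero (eq_of_row_rootMatrix_eq_smul hq₁ hgcd)
    (row_rootMatrix_zero hq₁) rootMatrix_ne_zero (injective_row_rootMatrix hq₂)
    (row_rootMatrix_zero hq₂) fun z₁ z₂ hz₁ hz₂ => by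
      have hz (j) : Fin.append z₁ z₂ j ≠ 0 := j.addCases (by simpa using hz₁) (by simpa using hz₂)
      have hmem := hFermi _ hz
      rwa [floquetDet_eq_zero_iff, floquetDet_eq_zero_iff,
        spectrum_floquetMatrix_append_of_separated hq,
        spectrum_floquetMatrix_append_of_separated hq] at hmem
  simp only [dftMatrix_apply_self, ← Complex.ofReal_sub] at h₁ h₂
  refine ⟨potentialAvg d1 (fun i => q (Fin.castAdd d2 i)) Y1 -
      potentialAvg d1 (fun i => q (Fin.castAdd d2 i)) V1,
    floquetIsospectral_of_charpoly_eq fun z hz => ?_,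
    floquetIsospectral_of_charpoly_eq fun z hz => ?_⟩
  · rw [floquetMatrix_eq_laurentMatrix, dftMatrix_add_const hq₁]
    exact h₁ z hz
  · rw [floquetMatrix_eq_laurentMatrix, dftMatrix_add_const hq₂, neg_sub]
    exact h₂ z hz

/-- Theorem 6.1: if `V = V₁ ⊕ V₂` and `Y = Y₁ ⊕ Y₂` are `(d₁,d₂)`
separable and Fermi isospectral, then up to constants `V_j` and `Y_j` are Floquet
isospectral, `j = 1, 2`. -/
theorem fermi_isospectral_two_blocks_floquet_isospectral
    (d1 d2 : ℕ) (hd1 : 2 ≤ d1) (hd2 : 1 ≤ d2)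
    (q : Fin (d1 + d2) → ℕ) (hq : ∀ j, 0 < q j)
    (hco : ∀ i j : Fin (d1 + d2), i ≠ j → Nat.Coprime (q i) (q j))
    (V Y : (Fin (d1 + d2) → ℤ) → ℝ)
    (hVper : IsPeriodicPotential (d1 + d2) q V) (hYper : IsPeriodicPotential (d1 + d2) q Y)
    (V1 Y1 : (Fin d1 → ℤ) → ℝ) (V2 Y2 : (Fin d2 → ℤ) → ℝ)
    (hVsep : ∀ n : Fin (d1 + d2) → ℤ,
      V n = V1 (fun i => n (Fin.castAdd d2 i)) + V2 (fun i => n (Fin.natAdd d1 i)))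
    (hYsep : ∀ n : Fin (d1 + d2) → ℤ,
      Y n = Y1 (fun i => n (Fin.castAdd d2 i)) + Y2 (fun i => n (Fin.natAdd d1 i)))
    (hFermi : FermiIsospectral (d1 + d2) q V Y) :
    (∃ C : ℝ, FloquetIsospectral d1 (fun i => q (Fin.castAdd d2 i))
        (fun m => V1 m + C) Y1) ∧
    (∃ C : ℝ, FloquetIsospectral d2 (fun i => q (Fin.natAdd d1 i))
        (fun m => V2 m + C) Y2) := by
  have : Nontrivial (Fin d1) := Fin.nontrivial_iff_two_le.2 hd1
  obtain rfl : V = _ := funext hVsep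
  obtain rfl : Y = _ := funext hYsep
  obtain ⟨lam0, hset⟩ := hFermi
  obtain ⟨C, h₁, h₂⟩ := fermi_isospectral_two_blocks_floquet_isospectral_general hd1 hd2 hq
    (univ_gcd_eq_one_of_pairwise_coprime fun i j hij =>
      hco _ _ ((Fin.castAdd_injective d1 d2).ne hij))
    fun z hz hV => (hset.subset ⟨hz, hV⟩).2
  exact ⟨⟨C, h₁⟩, -C, h₂⟩

end
end

section
/- Let m ≥ 2 and let q_1, …, q_m be pairwise coprime positive integers. Then there exists z⁰ = (z⁰_1, …, z⁰_m) ∈ ℂ^m with Σ_{j=1}^m z⁰_j = 0 such that for every (n_1,…,n_m) with 0 ≤ n_j ≤ q_j − 1 for all j and (n_1,…,n_m) ≠ (0,…,0), one has Σ_{j=1}^m e^{2πi n_j/q_j} z⁰_j ≠ 0. -/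
open scoped BigOperators
open Complex

/-!
On the hyperplane `∑ z j = 0`, the functional `z ↦ ∑ ζ j * z j` vanishes identically only when the
family `ζ` is constant. If also `ζ j ^ q j = 1` for all `j`, the common value has order dividing the
gcd of the `q j`, so it is `1` when that gcd is `1`. Hence the finitely many such families `ζ ≠ 1`
cut out proper subspaces of the hyperplane, and over an infinite field these cannot cover it.
-/

theorem finite_setOf_forall_pow_eq_one {ι R : Type*} [Finite ι] [CommRing R] [IsDomain R]
    {q : ι → ℕ} (hq : ∀ j, 0 < q j) : {ζ : ι → R | ∀ j, ζ j ^ q j = 1}.Finite := by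
  refine Set.Finite.pi' (t := fun j ↦ {x : R | x ^ q j = 1}) fun j ↦ ?_
  refine (Polynomial.nthRootsFinset (q j) (1 : R)).finite_toSet.subset fun x hx ↦ ?_
  exact (Polynomial.mem_nthRootsFinset (hq j) 1).mpr hx

section RootsOfUnity

variable {ι : Type*} [Fintype ι]

theorem gcd_univ_eq_one_of_pairwise_coprime [Nontrivial ι] {q : ι → ℕ}
    (hq : Pairwise (Function.onFun Nat.Coprime q)) : Finset.univ.gcd q = 1 := by
  obtain ⟨i, j, hij⟩ := exists_pair_ne ι
  exact Nat.eq_one_of_dvd_coprimes (hq hij) (Finset.gcd_dvd (Finset.mem_univ i))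
    (Finset.gcd_dvd (Finset.mem_univ j))

theorem exists_apply_ne_apply_of_pow_eq_one {M : Type*} [Monoid M] {q : ι → ℕ}
    (hq : Finset.univ.gcd q = 1) {ζ : ι → M} (hζ : ∀ j, ζ j ^ q j = 1) (hne : ζ ≠ 1) :
    ∃ i j, ζ i ≠ ζ j := by
  by_contra! hconst
  obtain ⟨i, hi⟩ := Function.ne_iff.mp hne
  have hdvd : orderOf (ζ i) ∣ Finset.univ.gcd q :=
    Finset.dvd_gcd fun j _ ↦ orderOf_dvd_of_pow_eq_one (hconst i j ▸ hζ j)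
  exact hi (orderOf_eq_one_iff.mp (Nat.dvd_one.mp (hq ▸ hdvd)))

theorem exists_sum_eq_zero_sum_mul_ne_zero {R : Type*} [NonAssocRing R] {ζ : ι → R} {i j : ι}
    (hij : ζ i ≠ ζ j) : ∃ z : ι → R, ∑ k, z k = 0 ∧ ∑ k, ζ k * z k ≠ 0 := by
  classical
  refine ⟨Pi.single i 1 - Pi.single j 1, by simp, ?_⟩
  simpa [mul_sub, Pi.single_apply, sub_eq_zero] using hij

variable {K : Type*} [Field K] [Infinite K]

theorem exists_sum_eq_zero_forall_sum_mul_ne_zero {S : Set (ι → K)} (hS : S.Finite)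
    (hne : ∀ ζ ∈ S, ∃ i j, ζ i ≠ ζ j) :
    ∃ z : ι → K, ∑ j, z j = 0 ∧ ∀ ζ ∈ S, ∑ j, ζ j * z j ≠ 0 := by
  have := hS.to_subtype
  let hyperplane : Submodule K (ι → K) := LinearMap.ker (Fintype.linearCombination K (1 : ι → K))
  have mem_hyperplane (z : ι → K) : z ∈ hyperplane ↔ ∑ j, z j = 0 := by
    simp [hyperplane, Fintype.linearCombination_apply]
  obtain ⟨z, hz, hSz⟩ := Module.Dual.exists_forall_mem_ne_zero_of_forall_exists hyperplane
    (fun ζ : S ↦ dotProductBilin K K ζ.1) fun ζ ↦ by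
      obtain ⟨i, j, hij⟩ := hne ζ ζ.2
      obtain ⟨z, hz, hζz⟩ := exists_sum_eq_zero_sum_mul_ne_zero hij
      exact ⟨z, (mem_hyperplane z).mpr hz, hζz⟩
  exact ⟨z, (mem_hyperplane z).mp hz, fun ζ hζ ↦ hSz ⟨ζ, hζ⟩⟩

theorem exists_vector_sum_zero_roots_of_unity_nonvanishing_general {q : ι → ℕ}
    (hq : ∀ j, 0 < q j) (hgcd : Finset.univ.gcd q = 1) :
    ∃ z : ι → K, ∑ j, z j = 0 ∧
      ∀ ζ : ι → K, (∀ j, ζ j ^ q j = 1) → ζ ≠ 1 → ∑ j, ζ j * z j ≠ 0 := by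
  have hfin : {ζ : ι → K | (∀ j, ζ j ^ q j = 1) ∧ ζ ≠ 1}.Finite :=
    (finite_setOf_forall_pow_eq_one hq).subset fun _ hζ ↦ hζ.1
  obtain ⟨z, hz, hζz⟩ := exists_sum_eq_zero_forall_sum_mul_ne_zero hfin fun _ hζ ↦
    exists_apply_ne_apply_of_pow_eq_one hgcd hζ.1 hζ.2
  exact ⟨z, hz, fun ζ hζ hne ↦ hζz ζ ⟨hζ, hne⟩⟩

end RootsOfUnity

theorem exp_two_pi_mul_I_mul_natCast_div (n q : ℕ) :
    exp (2 * Real.pi * I * n / q) = exp (2 * Real.pi * I / q) ^ n := by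
  rw [← exp_nat_mul]
  ring_nf

theorem exp_two_pi_mul_I_mul_natCast_div_pow_eq_one (n : ℕ) {q : ℕ} (hq : q ≠ 0) :
    exp (2 * Real.pi * I * n / q) ^ q = 1 := by
  rw [exp_two_pi_mul_I_mul_natCast_div, pow_right_comm, (isPrimitiveRoot_exp q hq).pow_eq_one,
    one_pow]

theorem exp_two_pi_mul_I_mul_natCast_div_ne_one {n q : ℕ} (hn : n ≠ 0) (hnq : n < q) :
    exp (2 * Real.pi * I * n / q) ≠ 1 := by
  rw [exp_two_pi_mul_I_mul_natCast_div]
  exact (isPrimitiveRoot_exp q (Nat.ne_zero_of_lt hnq)).pow_ne_one_of_pos_of_lt hn hnq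

/-- equations (4.12)–(4.13): for pairwise coprime `q₁,…,q_m`, there is a
vector `z⁰ ∈ ℂ^m` with `Σ z⁰_j = 0` such that `Σ_j e^{2πi n_j/q_j} z⁰_j ≠ 0` for every
`(n₁,…,n_m) ≠ (0,…,0)` with `0 ≤ n_j ≤ q_j − 1`. -/
theorem exists_vector_sum_zero_roots_of_unity_nonvanishing
    (m : ℕ) (hm : 2 ≤ m)
    (q : Fin m → ℕ) (hq : ∀ j, 0 < q j)
    (hco : ∀ i j : Fin m, i ≠ j → Nat.Coprime (q i) (q j)) :
    ∃ z : Fin m → ℂ, (∑ j, z j) = 0 ∧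
      ∀ n : (j : Fin m) → Fin (q j), (∃ j, (n j : ℕ) ≠ 0) →
        (∑ j, Complex.exp (2 * Real.pi * Complex.I * ((n j : ℕ) : ℂ) / (q j : ℂ)) * z j)
          ≠ 0 := by
  have : Nontrivial (Fin m) := Fin.nontrivial_iff_two_le.mpr hm
  obtain ⟨z, hz, hζz⟩ := exists_vector_sum_zero_roots_of_unity_nonvanishing_general (K := ℂ) hq
    (gcd_univ_eq_one_of_pairwise_coprime hco)
  exact ⟨z, hz, fun n ⟨j, hj⟩ ↦ hζz _
    (fun j ↦ exp_two_pi_mul_I_mul_natCast_div_pow_eq_one (n j) (hq j).ne')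
    (Function.ne_iff.mpr ⟨j, exp_two_pi_mul_I_mul_natCast_div_ne_one hj (n j).isLt⟩)⟩
end

section
/- Let q_1, q_2, q_3 be pairwise coprime positive integers, and write ρ^j_m = e^{2πi m/q_j}. Fix l_1 ∈ {1,…,q_1−1}, l_2 ∈ {1,…,q_2−1}, and l_3 ∈ {0,…,q_3−1}. Then the linear system z_1 + z_2 + z_3 = 0, ρ^1_{l_1} z_1 + ρ^2_{l_2} z_2 + ρ^3_{l_3} z_3 = 0 has a nonzero solution (z⁰_1, z⁰_2, z⁰_3) ∈ ℂ³, and every nonzero solution satisfies: for all l_1′ ∈ {0,…,q_1−1}, l_2′ ∈ {0,…,q_2−1}, l_3′ ∈ {0,…,q_3−1} with (l_1′,l_2′,l_3′) ≠ (0,0,0) and (l_1′,l_2′,l_3′) ≠ (l_1,l_2,l_3), one has ρ^1_{l_1′} z⁰_1 + ρ^2_{l_2′} z⁰_2 + ρ^3_{l_3′} z⁰_3 ≠ 0. -/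
open scoped BigOperators
open Complex

/-!
Only the ratios of the coefficients matter. If unimodular `u`, `v` satisfy `u z₁ + v z₂ + z₃ = 0`,
then `u z₁` lies on the circle of radius `‖z₁‖` about `0` and on the circle of radius `‖z₂‖` about
`-z₃`. Two circles with different centres share at most two points, and the two given equations
already provide two. So, up to a common factor `w`, the only unimodular triples of coefficients
annihilating `z` are `(1, 1, 1)` and `(ρ¹_{l₁}, ρ²_{l₂}, ρ³_{l₃})`; among roots of unity whose
orders divide `q₁`, `q₂`, `q₃` respectively, `w` is a `gcd(q₁, q₂, q₃)`-th root of unity,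
that is, `w = 1`.
-/

section LinearSystem

variable {F : Type*} [Field F] {a b c z₁ z₂ z₃ : F}

theorem exists_eq_mul_sub_of_relations (hbc : b ≠ c) (hsum : z₁ + z₂ + z₃ = 0)
    (hrel : a * z₁ + b * z₂ + c * z₃ = 0) :
    ∃ t, z₁ = t * (b - c) ∧ z₂ = t * (c - a) ∧ z₃ = t * (a - b) := by
  have hbc' : b - c ≠ 0 := sub_ne_zero.mpr hbc
  have h₁ : z₁ = z₁ / (b - c) * (b - c) := (div_mul_cancel₀ z₁ hbc').symm
  have h₂ : z₂ = z₁ / (b - c) * (c - a) := by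
    field_simp
    linear_combination hrel - c * hsum
  exact ⟨z₁ / (b - c), h₁, h₂, by linear_combination hsum - h₁ - h₂⟩

theorem ne_zero_of_relations (hab : a ≠ b) (hac : a ≠ c) (hbc : b ≠ c)
    (hz : ¬(z₁ = 0 ∧ z₂ = 0 ∧ z₃ = 0)) (hsum : z₁ + z₂ + z₃ = 0)
    (hrel : a * z₁ + b * z₂ + c * z₃ = 0) : z₁ ≠ 0 ∧ z₂ ≠ 0 ∧ z₃ ≠ 0 := by
  obtain ⟨t, rfl, rfl, rfl⟩ := exists_eq_mul_sub_of_relations hbc hsum hrel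
  have ht : t ≠ 0 := by
    rintro rfl
    simp at hz
  exact ⟨mul_ne_zero ht (sub_ne_zero.mpr hbc), mul_ne_zero ht (sub_ne_zero.mpr hac.symm),
    mul_ne_zero ht (sub_ne_zero.mpr hab)⟩

end LinearSystem

section Unimodular

variable {z₁ z₂ z₃ : ℂ}

theorem dist_mul_neg_of_relation {u v : ℂ} (hv : ‖v‖ = 1) (h : u * z₁ + v * z₂ + z₃ = 0) :
    dist (u * z₁) (-z₃) = ‖z₂‖ := by
  have : u * z₁ - -z₃ = -(v * z₂) := by linear_combination h
  rw [dist_eq_norm, this, norm_neg, norm_mul, hv, one_mul]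

theorem unimodular_pair_eq_one_or_eq {u v u' v' : ℂ} (hu : ‖u‖ = 1) (hv : ‖v‖ = 1)
    (hu' : ‖u'‖ = 1) (hv' : ‖v'‖ = 1) (hu1 : u ≠ 1) (hz₁ : z₁ ≠ 0) (hz₂ : z₂ ≠ 0) (hz₃ : z₃ ≠ 0)
    (hsum : z₁ + z₂ + z₃ = 0) (hrel : u * z₁ + v * z₂ + z₃ = 0)
    (hrel' : u' * z₁ + v' * z₂ + z₃ = 0) : (u' = 1 ∧ v' = 1) ∨ (u' = u ∧ v' = v) := by
  have dist_zero {x : ℂ} (hx : ‖x‖ = 1) : dist (x * z₁) 0 = ‖z₁‖ := by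
    rw [dist_zero_right, norm_mul, hx, one_mul]
  have hsum' : 1 * z₁ + 1 * z₂ + z₃ = 0 := by simpa only [one_mul] using hsum
  have meet : u' * z₁ = 1 * z₁ ∨ u' * z₁ = u * z₁ :=
    EuclideanGeometry.eq_of_dist_eq_of_dist_eq_of_finrank_eq_two finrank_real_complex
      (neg_ne_zero.mpr hz₃).symm (fun h => hu1 (mul_right_cancel₀ hz₁ h).symm)
      (dist_zero norm_one) (dist_zero hu) (dist_zero hu')
      (dist_mul_neg_of_relation norm_one hsum') (dist_mul_neg_of_relation hv hrel)
      (dist_mul_neg_of_relation hv' hrel')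
  refine meet.imp (fun h => ⟨mul_right_cancel₀ hz₁ h, mul_right_cancel₀ hz₂ ?_⟩)
    (fun h => ⟨mul_right_cancel₀ hz₁ h, mul_right_cancel₀ hz₂ ?_⟩)
  · linear_combination hrel' - hsum' - h
  · linear_combination hrel' - hrel - h

theorem unimodular_triple_eq_const_or_eq_mul {a b c a' b' c' : ℂ}
    (ha : ‖a‖ = 1) (hb : ‖b‖ = 1) (hc : ‖c‖ = 1) (ha' : ‖a'‖ = 1) (hb' : ‖b'‖ = 1) (hc' : ‖c'‖ = 1)
    (hab : a ≠ b) (hac : a ≠ c) (hbc : b ≠ c)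
    (hz : ¬(z₁ = 0 ∧ z₂ = 0 ∧ z₃ = 0)) (hsum : z₁ + z₂ + z₃ = 0)
    (hrel : a * z₁ + b * z₂ + c * z₃ = 0) (hrel' : a' * z₁ + b' * z₂ + c' * z₃ = 0) :
    ∃ w, (a' = w ∧ b' = w ∧ c' = w) ∨ (a' = w * a ∧ b' = w * b ∧ c' = w * c) := by
  obtain ⟨hz₁, hz₂, hz₃⟩ := ne_zero_of_relations hab hac hbc hz hsum hrel
  have norm_div_eq_one {x y : ℂ} (hx : ‖x‖ = 1) (hy : ‖y‖ = 1) : ‖x / y‖ = 1 := by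
    rw [norm_div, hx, hy, div_one]
  have hc0 : c ≠ 0 := norm_ne_zero_iff.mp (hc ▸ one_ne_zero)
  have hc0' : c' ≠ 0 := norm_ne_zero_iff.mp (hc' ▸ one_ne_zero)
  have hac' : a / c ≠ 1 := by rwa [ne_eq, div_eq_one_iff_eq hc0]
  have normalized {x y s : ℂ} (hs : s ≠ 0) (h : x * z₁ + y * z₂ + s * z₃ = 0) :
      x / s * z₁ + y / s * z₂ + z₃ = 0 := by
    field_simp
    linear_combination h
  rcases unimodular_pair_eq_one_or_eq (norm_div_eq_one ha hc) (norm_div_eq_one hb hc)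
    (norm_div_eq_one ha' hc') (norm_div_eq_one hb' hc') hac' hz₁ hz₂ hz₃ hsum
    (normalized hc0 hrel) (normalized hc0' hrel') with ⟨h₁, h₂⟩ | ⟨h₁, h₂⟩
  · exact ⟨c', .inl ⟨(div_eq_one_iff_eq hc0').mp h₁, (div_eq_one_iff_eq hc0').mp h₂, rfl⟩⟩
  · have eq_mul {x x' : ℂ} (h : x' / c' = x / c) : x' = c' / c * x := by
      rw [div_mul_comm, ← h, div_mul_cancel₀ _ hc0']
    exact ⟨c' / c, .inr ⟨eq_mul h₁, eq_mul h₂, (div_mul_cancel₀ c' hc0).symm⟩⟩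

end Unimodular

/-- The root of unity `ρ^q_m = e^{2πi m/q}`, with the exponent written as in
`roots_of_unity_linear_system`. For `q = 0` its value is `1`, since `m / 0 = 0`. -/
noncomputable def unityRoot (q m : ℕ) : ℂ :=
  Complex.exp (2 * Real.pi * Complex.I * (m : ℂ) / (q : ℂ))

section UnityRoot

variable {q m n : ℕ}

theorem unityRoot_eq_pow (q m : ℕ) :
    unityRoot q m = Complex.exp (2 * Real.pi * Complex.I / q) ^ m := by
  rw [unityRoot, ← Complex.exp_nat_mul]
  congr 1
  ring

theorem unityRoot_zero_right (q : ℕ) : unityRoot q 0 = 1 := by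
  rw [unityRoot_eq_pow, pow_zero]

theorem unityRoot_pow_eq_one (q m : ℕ) : unityRoot q m ^ q = 1 := by
  rcases eq_or_ne q 0 with rfl | hq
  · exact pow_zero _
  · rw [unityRoot_eq_pow, pow_right_comm, (Complex.isPrimitiveRoot_exp q hq).pow_eq_one, one_pow]

theorem norm_unityRoot (hq : q ≠ 0) (m : ℕ) : ‖unityRoot q m‖ = 1 :=
  Complex.norm_eq_one_of_pow_eq_one (unityRoot_pow_eq_one q m) hq

theorem unityRoot_inj (hm : m < q) (hn : n < q) (h : unityRoot q m = unityRoot q n) : m = n := by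
  rw [unityRoot_eq_pow, unityRoot_eq_pow] at h
  exact (Complex.isPrimitiveRoot_exp q (Nat.ne_zero_of_lt hm)).pow_inj hm hn h

theorem unityRoot_ne_of_coprime {r : ℕ} (hqr : q.Coprime r) (hm : 0 < m) (hmq : m < q) (n : ℕ) :
    unityRoot q m ≠ unityRoot r n := by
  intro h
  have hone : unityRoot q m = 1 := (pow_eq_one_iff_of_coprime hqr).mp
    ⟨unityRoot_pow_eq_one q m, h ▸ unityRoot_pow_eq_one r n⟩
  rw [← unityRoot_zero_right q] at hone
  exact hm.ne' (unityRoot_inj hmq (hm.trans hmq) hone)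

theorem pow_eq_one_of_unityRoot_eq_mul {w : ℂ} (h : unityRoot q m = w * unityRoot q n) :
    w ^ q = 1 := by
  have hpow := congrArg (· ^ q) h
  simpa only [mul_pow, unityRoot_pow_eq_one, mul_one, eq_comm] using hpow

theorem index_eq_of_unityRoot_eq_mul {q₁ q₂ q₃ l₁ l₂ l₃ m₁ m₂ m₃ : ℕ}
    (hgcd : (q₁.gcd q₂).Coprime q₃) (hl₁ : l₁ < q₁) (hl₂ : l₂ < q₂) (hl₃ : l₃ < q₃)
    (hm₁ : m₁ < q₁) (hm₂ : m₂ < q₂) (hm₃ : m₃ < q₃) {w : ℂ}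
    (h₁ : unityRoot q₁ m₁ = w * unityRoot q₁ l₁) (h₂ : unityRoot q₂ m₂ = w * unityRoot q₂ l₂)
    (h₃ : unityRoot q₃ m₃ = w * unityRoot q₃ l₃) : m₁ = l₁ ∧ m₂ = l₂ ∧ m₃ = l₃ := by
  obtain rfl : w = 1 := (pow_eq_one_iff_of_coprime hgcd).mp
    ⟨pow_gcd_eq_one.mpr ⟨pow_eq_one_of_unityRoot_eq_mul h₁, pow_eq_one_of_unityRoot_eq_mul h₂⟩,
      pow_eq_one_of_unityRoot_eq_mul h₃⟩
  rw [one_mul] at h₁ h₂ h₃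
  exact ⟨unityRoot_inj hm₁ hl₁ h₁, unityRoot_inj hm₂ hl₂ h₂, unityRoot_inj hm₃ hl₃ h₃⟩

end UnityRoot

theorem roots_of_unity_linear_system_general {q₁ q₂ q₃ l₁ l₂ l₃ : ℕ}
    (hgcd : (q₁.gcd q₂).Coprime q₃) (hl₁ : l₁ < q₁) (hl₂ : l₂ < q₂) (hl₃ : l₃ < q₃)
    (h₁₂ : unityRoot q₁ l₁ ≠ unityRoot q₂ l₂) (h₁₃ : unityRoot q₁ l₁ ≠ unityRoot q₃ l₃)
    (h₂₃ : unityRoot q₂ l₂ ≠ unityRoot q₃ l₃) :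
    (∃ z₁ z₂ z₃ : ℂ, ¬(z₁ = 0 ∧ z₂ = 0 ∧ z₃ = 0) ∧ z₁ + z₂ + z₃ = 0 ∧
      unityRoot q₁ l₁ * z₁ + unityRoot q₂ l₂ * z₂ + unityRoot q₃ l₃ * z₃ = 0) ∧
    (∀ z₁ z₂ z₃ : ℂ, ¬(z₁ = 0 ∧ z₂ = 0 ∧ z₃ = 0) → z₁ + z₂ + z₃ = 0 →
      unityRoot q₁ l₁ * z₁ + unityRoot q₂ l₂ * z₂ + unityRoot q₃ l₃ * z₃ = 0 →
      ∀ m₁ m₂ m₃ : ℕ, m₁ < q₁ → m₂ < q₂ → m₃ < q₃ →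
        ¬(m₁ = 0 ∧ m₂ = 0 ∧ m₃ = 0) → ¬(m₁ = l₁ ∧ m₂ = l₂ ∧ m₃ = l₃) →
        unityRoot q₁ m₁ * z₁ + unityRoot q₂ m₂ * z₂ + unityRoot q₃ m₃ * z₃ ≠ 0) := by
  constructor
  · exact ⟨unityRoot q₂ l₂ - unityRoot q₃ l₃, unityRoot q₃ l₃ - unityRoot q₁ l₁,
      unityRoot q₁ l₁ - unityRoot q₂ l₂, fun h => h₂₃ (sub_eq_zero.mp h.1), by ring, by ring⟩
  · intro z₁ z₂ z₃ hz hsum hrel m₁ m₂ m₃ hm₁ hm₂ hm₃ hm_zero hm_l hrel'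
    have hq₁ := Nat.ne_zero_of_lt hl₁
    have hq₂ := Nat.ne_zero_of_lt hl₂
    have hq₃ := Nat.ne_zero_of_lt hl₃
    obtain ⟨w, ⟨e₁, e₂, e₃⟩ | ⟨e₁, e₂, e₃⟩⟩ := unimodular_triple_eq_const_or_eq_mul
      (norm_unityRoot hq₁ l₁) (norm_unityRoot hq₂ l₂) (norm_unityRoot hq₃ l₃)
      (norm_unityRoot hq₁ m₁) (norm_unityRoot hq₂ m₂) (norm_unityRoot hq₃ m₃)
      h₁₂ h₁₃ h₂₃ hz hsum hrel hrel'
    · have eq_mul {q m : ℕ} (h : unityRoot q m = w) : unityRoot q m = w * unityRoot q 0 := by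
        rw [h, unityRoot_zero_right, mul_one]
      exact hm_zero (index_eq_of_unityRoot_eq_mul hgcd (Nat.pos_of_ne_zero hq₁)
        (Nat.pos_of_ne_zero hq₂) (Nat.pos_of_ne_zero hq₃) hm₁ hm₂ hm₃
        (eq_mul e₁) (eq_mul e₂) (eq_mul e₃))
    · exact hm_l (index_eq_of_unityRoot_eq_mul hgcd hl₁ hl₂ hl₃ hm₁ hm₂ hm₃ e₁ e₂ e₃)

/-- equations (4.9)–(4.11): for pairwise coprime `q₁, q₂, q₃` and
`l₁ ∈ {1,…,q₁−1}`, `l₂ ∈ {1,…,q₂−1}`, `l₃ ∈ {0,…,q₃−1}`, the linear system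
`z₁ + z₂ + z₃ = 0`, `ρ¹_{l₁} z₁ + ρ²_{l₂} z₂ + ρ³_{l₃} z₃ = 0` has a nonzero solution, and
every nonzero solution satisfies `ρ¹_{l₁'} z₁ + ρ²_{l₂'} z₂ + ρ³_{l₃'} z₃ ≠ 0` for all
`(l₁',l₂',l₃') ∉ {(0,0,0), (l₁,l₂,l₃)}` in the admissible range. -/
theorem roots_of_unity_linear_system
    (q1 q2 q3 : ℕ) (hq1 : 0 < q1) (hq2 : 0 < q2) (hq3 : 0 < q3)
    (h12 : Nat.Coprime q1 q2) (h13 : Nat.Coprime q1 q3) (h23 : Nat.Coprime q2 q3)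
    (l1 l2 l3 : ℕ) (hl1 : 0 < l1) (hl1q : l1 < q1) (hl2 : 0 < l2) (hl2q : l2 < q2)
    (hl3 : l3 < q3) :
    (∃ z1 z2 z3 : ℂ, ¬(z1 = 0 ∧ z2 = 0 ∧ z3 = 0) ∧
      z1 + z2 + z3 = 0 ∧
      Complex.exp (2 * Real.pi * Complex.I * (l1 : ℂ) / (q1 : ℂ)) * z1 +
        Complex.exp (2 * Real.pi * Complex.I * (l2 : ℂ) / (q2 : ℂ)) * z2 +
        Complex.exp (2 * Real.pi * Complex.I * (l3 : ℂ) / (q3 : ℂ)) * z3 = 0) ∧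
    (∀ z1 z2 z3 : ℂ, ¬(z1 = 0 ∧ z2 = 0 ∧ z3 = 0) →
      z1 + z2 + z3 = 0 →
      Complex.exp (2 * Real.pi * Complex.I * (l1 : ℂ) / (q1 : ℂ)) * z1 +
        Complex.exp (2 * Real.pi * Complex.I * (l2 : ℂ) / (q2 : ℂ)) * z2 +
        Complex.exp (2 * Real.pi * Complex.I * (l3 : ℂ) / (q3 : ℂ)) * z3 = 0 →
      ∀ l1' l2' l3' : ℕ, l1' < q1 → l2' < q2 → l3' < q3 →
        ¬(l1' = 0 ∧ l2' = 0 ∧ l3' = 0) → ¬(l1' = l1 ∧ l2' = l2 ∧ l3' = l3) →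
        Complex.exp (2 * Real.pi * Complex.I * (l1' : ℂ) / (q1 : ℂ)) * z1 +
          Complex.exp (2 * Real.pi * Complex.I * (l2' : ℂ) / (q2 : ℂ)) * z2 +
          Complex.exp (2 * Real.pi * Complex.I * (l3' : ℂ) / (q3 : ℂ)) * z3 ≠ 0) :=
  roots_of_unity_linear_system_general (h12.gcd_eq_one ▸ Nat.coprime_one_left q3) hl1q hl2q hl3
    (unityRoot_ne_of_coprime h12 hl1 hl1q l2) (unityRoot_ne_of_coprime h13 hl1 hl1q l3)
    (unityRoot_ne_of_coprime h23 hl2 hl2q l3)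
end
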